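/- arXiv:1308.4631 — 12 statements merged into one kernel-verified Lean document; each statement's English description precedes it below -/
import Mathlib

section
/- Let n ≥ 1 and let b be an n×n real upper triangular matrix such that Δ^m_k(b) > 0 for all 1 ≤ k ≤ m ≤ n. Then there exist unique vectors w^m ∈ (ℝ_{>0})^{n−m+1}, 1 ≤ m ≤ n, such that b = E_1(w^1) E_2(w^2) ⋯ E_n(w^n); moreover they are given explicitly by w^m_1 = Δ^m_1(b) and w^m_i = (Δ^{m+i−1}_i(b) · Δ^{m+i−2}_{i−2}(b)) / (Δ^{m+i−1}_{i−1}(b) · Δ^{m+i−2}_{i−1}(b)) for 1 < i ≤ n−m+1. -/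
/-- The minor `Δ^m_k(b)`: determinant of the `k × k` submatrix of `b` with rows `1,…,k`
and columns `m−k+1,…,m` (1-based), i.e. rows `0,…,k−1` and columns `m−k,…,m−1` (0-based).
For `k = 0` this is the determinant of the empty matrix, namely `1`. -/
noncomputable def Delta {n : ℕ} (b : Matrix (Fin n) (Fin n) ℝ) (k m : ℕ) : ℝ :=
  Matrix.det (Matrix.of fun i j : Fin k =>
    if h : (i : ℕ) < n ∧ m - k + (j : ℕ) < n then b ⟨i, h.1⟩ ⟨m - k + (j : ℕ), h.2⟩ else 0)

/-- `E_{p+1}(w)` (1-based index `m = p+1`): the block-diagonal matrix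
`diag(I_p, ε^{n-p}(w))`, where `w 0, w 1, …` are the entries `w_1, w_2, …`. -/
def Emat {n : ℕ} (p : ℕ) (w : ℕ → ℝ) : Matrix (Fin n) (Fin n) ℝ :=
  Matrix.of fun i j =>
    if (i : ℕ) < p then (if j = i then 1 else 0)
    else if j = i then w ((i : ℕ) - p)
    else if (j : ℕ) = (i : ℕ) + 1 then 1 else 0

/-- Entries of the product, defined by recursion on the size. -/
def FF : ℕ → (ℕ → ℕ → ℝ) → ℕ → ℕ → ℝ
  | 0, _, _, _ => 0
  | _ + 1, w, 0, 0 => w 0 0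
  | N + 1, w, 0, j + 1 => FF N (fun m => w (m + 1)) 0 j
  | _ + 1, _, _ + 1, 0 => 0
  | N + 1, w, i + 1, j + 1 =>
    w 0 (i + 1) * FF N (fun m => w (m + 1)) i j + FF N (fun m => w (m + 1)) (i + 1) j

noncomputable def DD (X : ℕ → ℕ → ℝ) (k s : ℕ) : ℝ :=
  Matrix.det (Matrix.of fun i j : Fin k => X i (s + j))

theorem FF_tri (N : ℕ) : ∀ w i j, j < i → FF N w i j = 0 := by
  induction N with
  | zero => intro w i j _; rfl
  | succ N ih =>
    intro w i j h
    rcases i with _ | i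
    · omega
    rcases j with _ | j
    · rfl
    simp only [FF]
    rw [ih _ _ _ (by omega), ih _ _ _ (by omega)]; simp

theorem FF_row (N : ℕ) : ∀ w i j, N ≤ i → FF N w i j = 0 := by
  induction N with
  | zero => intro w i j _; rfl
  | succ N ih =>
    intro w i j h
    rcases i with _ | i
    · omega
    rcases j with _ | j
    · rfl
    simp only [FF]
    rw [ih _ _ _ (by omega), ih _ _ _ (by omega)]; simp

theorem DD_step (X Y : ℕ → ℕ → ℝ) (v : ℕ → ℝ) (h0 : ∀ j, X 0 (j + 1) = Y 0 j)
    (hs : ∀ i j, X (i + 1) (j + 1) = v (i + 1) * Y i j + Y (i + 1) j) (k s : ℕ) :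
    DD X k (s + 1) = DD Y k s := by
  rcases k with _ | k
  · simp [DD]
  symm
  unfold DD
  apply Matrix.det_eq_of_forall_row_eq_smul_add_pred (fun i => - v ((i : ℕ) + 1))
  · intro j
    simp only [Matrix.of_apply, Fin.val_zero]
    rw [show s + 1 + (j : ℕ) = s + j + 1 by ring, h0]
  · intro i j
    simp only [Matrix.of_apply, Fin.val_succ, Fin.val_castSucc]
    rw [show s + 1 + (j : ℕ) = s + j + 1 by ring, hs]
    ring

theorem DD_FF (N : ℕ) (w : ℕ → ℕ → ℝ) (k s : ℕ) :
    DD (FF (N + 1) w) k (s + 1) = DD (FF N (fun m => w (m + 1))) k s :=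
  DD_step _ _ (w 0) (fun _ => rfl) (fun _ _ => rfl) k s

theorem DD_tri (X : ℕ → ℕ → ℝ) (k : ℕ) (h : ∀ i j, i < k → j < i → X i j = 0) :
    DD X k 0 = ∏ i ∈ Finset.range k, X i i := by
  unfold DD
  rw [Matrix.det_of_isUpperTriangular]
  · rw [Finset.prod_range]; simp
  · intro i j hij
    simp only [Matrix.of_apply, Nat.zero_add]
    exact h _ _ i.2 hij

theorem DD_succ (X : ℕ → ℕ → ℝ) (k : ℕ) (h : ∀ i j, i < k + 1 → j < i → X i j = 0) :
    DD X (k + 1) 0 = DD X k 0 * X k k := by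
  rw [DD_tri X _ h, DD_tri X k (fun i j hi => h i j (by omega)), Finset.prod_range_succ]

theorem DD_zero (X : ℕ → ℕ → ℝ) (s : ℕ) : DD X 0 s = 1 := by simp [DD]

theorem DD_one (X : ℕ → ℕ → ℝ) (s : ℕ) : DD X 1 s = X 0 s := by simp [DD]

noncomputable def GG (X : ℕ → ℕ → ℝ) (m i : ℕ) : ℝ :=
  if i = 0 then DD X 1 m else
    DD X (i + 1) m * DD X (i - 1) (m + 1) / (DD X i (m + 1) * DD X i m)

theorem FF_formula (N : ℕ) : ∀ w, (∀ k s, k + s ≤ N → 0 < DD (FF N w) k s) →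
    ∀ m i, m + i < N → w m i = GG (FF N w) m i := by
  induction N with
  | zero => intro w _ m i h; omega
  | succ N ih =>
    intro w hp m i hmi
    have hp' : ∀ k s, k + s ≤ N → 0 < DD (FF N (fun m => w (m + 1))) k s := by
      intro k s h
      rw [← DD_FF]
      exact hp _ _ (by omega)
    rcases m with _ | m
    · rcases i with _ | i
      · simp [GG, DD_one, FF]
      · have e1 := DD_succ (FF (N + 1) w) (i + 1) (fun i j _ => FF_tri _ _ i j)
        have e2 := DD_succ (FF N (fun m => w (m + 1))) i (fun i j _ => FF_tri _ _ i j)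
        have e3 : FF (N + 1) w (i + 1) (i + 1) = w 0 (i + 1) * FF N (fun m => w (m + 1)) i i := by
          simp only [FF]
          rw [FF_tri N _ (i + 1) i (by omega), add_zero]
        have p1 := hp (i + 1) 0 (by omega)
        have p2 := hp' (i + 1) 0 (by omega)
        have p3 := hp' i 0 (by omega)
        simp only [GG, Nat.add_eq_zero_iff, one_ne_zero, and_false, if_false, Nat.add_sub_cancel,
          DD_FF]
        rw [e1, e3]
        rw [eq_div_iff (mul_pos p2 p1).ne', e2]
        ring
    · have := ih _ hp' m i (by omega)
      rw [this]
      simp only [GG, DD_FF]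

/-- Rows of the next-level matrix. -/
noncomputable def YY (X : ℕ → ℕ → ℝ) : ℕ → ℕ → ℝ
  | 0, j => X 0 (j + 1)
  | i + 1, j => X (i + 1) (j + 1) - X (i + 1) (i + 1) / YY X i i * YY X i j

theorem FF_exists (N : ℕ) : ∀ X : ℕ → ℕ → ℝ, (∀ i j, j < i → X i j = 0) →
    (∀ i j, N ≤ i → X i j = 0) → (∀ i j, N ≤ j → X i j = 0) →
    (∀ k s, k + s ≤ N → 0 < DD X k s) →
    ∃ w : ℕ → ℕ → ℝ, (∀ m i, m + i < N → 0 < w m i) ∧ FF N w = X := by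
  induction N with
  | zero =>
    intro X _ h2 _ _
    refine ⟨fun _ _ => 0, fun m i h => by omega, ?_⟩
    funext i j
    rw [h2 i j (by omega)]; rfl
  | succ N ih =>
    intro X h1 h2 h3 hp
    set v : ℕ → ℝ := fun i => match i with
      | 0 => X 0 0
      | i + 1 => X (i + 1) (i + 1) / YY X i i with hv
    have hY0 : ∀ j, X 0 (j + 1) = YY X 0 j := fun j => rfl
    have hYs : ∀ i j, X (i + 1) (j + 1) = v (i + 1) * YY X i j + YY X (i + 1) j := by
      intro i j
      simp only [hv, YY]; ring
    have hD : ∀ k s, DD X k (s + 1) = DD (YY X) k s := DD_step X (YY X) v hY0 hYs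
    have hpY : ∀ k s, k + s ≤ N → 0 < DD (YY X) k s := by
      intro k s h
      rw [← hD]; exact hp _ _ (by omega)
    have hcol : ∀ i j, N ≤ j → YY X i j = 0 := by
      intro i
      induction i with
      | zero => intro j hj; exact h3 _ _ (by omega)
      | succ i ihi =>
        intro j hj
        simp only [YY]
        rw [h3 _ _ (by omega), ihi j hj]; simp
    have htri : ∀ i, (∀ i' j, i' ≤ i → j < i' → YY X i' j = 0) := by
      intro i
      induction i with
      | zero => intro i' j h h'; omega
      | succ i ihi =>
        intro i' j h h'
        rcases Nat.lt_or_ge i' (i + 1) with h4 | h4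
        · exact ihi _ _ (by omega) h'
        obtain rfl : i' = i + 1 := by omega
        simp only [YY]
        rcases Nat.lt_or_ge j i with h5 | h5
        · rw [h1 _ _ (by omega), ihi i j le_rfl h5]; simp
        obtain rfl : j = i := by omega
        rcases Nat.lt_or_ge j N with h6 | h6
        · have e := DD_succ (YY X) j (fun i' j' hi => ihi i' j' (by omega))
          have p := hpY (j + 1) 0 (by omega)
          have : YY X j j ≠ 0 := by
            intro h0
            rw [h0, mul_zero] at e
            exact p.ne' e
          field_simp
          simp
        · rw [h2 _ _ (by omega)]; simp
    have htri' : ∀ i j, j < i → YY X i j = 0 := fun i j => htri i i j le_rfl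
    have hdiag : ∀ i, i < N → 0 < YY X i i := by
      intro i hi
      have e := DD_succ (YY X) i (fun i' j' _ => htri' i' j')
      have p := hpY (i + 1) 0 (by omega)
      have p' := hpY i 0 (by omega)
      rw [e] at p
      exact (pos_iff_pos_of_mul_pos p).1 p'
    have hdiagX : ∀ i, i < N + 1 → 0 < X i i := by
      intro i hi
      have e := DD_succ X i (fun i' j' _ => h1 i' j')
      have p := hp (i + 1) 0 (by omega)
      have p' := hp i 0 (by omega)
      rw [e] at p
      exact (pos_iff_pos_of_mul_pos p).1 p'
    have hrow : ∀ i j, N ≤ i → YY X i j = 0 := by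
      intro i j hi
      rcases Nat.lt_or_ge j i with h | h
      · exact htri' i j h
      · exact hcol i j (by omega)
    obtain ⟨w', hw', hF⟩ := ih (YY X) htri' hrow hcol hpY
    refine ⟨fun m => match m with
      | 0 => v
      | m + 1 => w' m, ?_, ?_⟩
    · intro m i hmi
      rcases m with _ | m
      · rcases i with _ | i
        · exact hdiagX 0 (by omega)
        · exact div_pos (hdiagX _ (by omega)) (hdiag _ (by omega))
      · exact hw' m i (by omega)
    · funext i j
      rcases i with _ | i <;> rcases j with _ | j
      · rfl
      · simp only [FF]
        rw [hF]; rfl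
      · simp only [FF]
        exact (h1 _ _ (by omega)).symm
      · simp only [FF]
        rw [hF]; exact (hYs i j).symm

/-- Block matrix `diag(1, A)`. -/
def lift1 {n : ℕ} (A : Matrix (Fin n) (Fin n) ℝ) : Matrix (Fin (n + 1)) (Fin (n + 1)) ℝ :=
  Matrix.of fun i j => Fin.cases (Fin.cases 1 (fun _ => 0) j)
    (fun i => Fin.cases 0 (fun j => A i j) j) i

theorem lift1_mul {n : ℕ} (A B : Matrix (Fin n) (Fin n) ℝ) :
    lift1 (A * B) = lift1 A * lift1 B := by
  ext i j
  rw [Matrix.mul_apply, Fin.sum_univ_succ]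
  refine Fin.cases ?_ (fun i => ?_) i <;> refine Fin.cases ?_ (fun j => ?_) j <;>
    simp [lift1, Matrix.mul_apply]

theorem lift1_one {n : ℕ} : lift1 (1 : Matrix (Fin n) (Fin n) ℝ) = 1 := by
  ext i j
  refine Fin.cases ?_ (fun i => ?_) i <;> refine Fin.cases ?_ (fun j => ?_) j <;>
    simp [lift1, Matrix.one_apply, Fin.ext_iff]

theorem lift1_Emat {n : ℕ} (p : ℕ) (w : ℕ → ℝ) :
    lift1 (Emat (n := n) p w) = Emat (p + 1) w := by
  ext i j
  refine Fin.cases ?_ (fun i => ?_) i <;> refine Fin.cases ?_ (fun j => ?_) j <;>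
    simp [lift1, Emat, Fin.ext_iff]

theorem lift1_prod {n : ℕ} {α : Type} (L : List α) (f : α → Matrix (Fin n) (Fin n) ℝ) :
    (L.map (fun a => lift1 (f a))).prod = lift1 (L.map f).prod := by
  induction L with
  | nil => simp [lift1_one]
  | cons a L ih => simp [ih, lift1_mul]

theorem Emat_mul {n : ℕ} (w : ℕ → ℝ) (A : Matrix (Fin n) (Fin n) ℝ) (i j : Fin n) :
    (Emat (n := n) 0 w * A) i j = w i * A i j + if h : (i : ℕ) + 1 < n then A ⟨i + 1, h⟩ j else 0 := by
  rw [Matrix.mul_apply]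
  have : ∀ l : Fin n, Emat (n := n) 0 w i l * A l j =
      (if l = i then w i * A i j else 0) + (if (l : ℕ) = i + 1 then A l j else 0) := by
    intro l
    simp only [Emat, Matrix.of_apply, Nat.not_lt_zero, if_false, Nat.sub_zero]
    by_cases h : l = i
    · subst h; simp
    · simp [h]
  rw [Finset.sum_congr rfl (fun l _ => this l), Finset.sum_add_distrib]
  congr 1
  · simp
  · split_ifs with h
    · rw [Finset.sum_eq_single (⟨i + 1, h⟩ : Fin n)]
      · simp
      · intro l _ hl
        rw [if_neg]
        intro h'; exact hl (Fin.ext h')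
      · simp
    · apply Finset.sum_eq_zero
      intro l _
      rw [if_neg]
      have := l.2
      omega

theorem prod_eq (n : ℕ) : ∀ (w : ℕ → ℕ → ℝ) (i j : Fin n),
    ((List.finRange n).map (fun (m : Fin n) => Emat (n := n) (m : ℕ) (w m))).prod i j
      = FF n w i j := by
  induction n with
  | zero => intro w i; exact i.elim0
  | succ n ih =>
    intro w i j
    rw [List.finRange_succ, List.map_cons, List.prod_cons, List.map_map]
    have : ((fun m : Fin (n + 1) => Emat (n := n + 1) (m : ℕ) (w m)) ∘ Fin.succ)
        = fun m : Fin n => lift1 (Emat (n := n) (m : ℕ) (w (m + 1))) := by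
      funext m
      simp [lift1_Emat]
    rw [this, lift1_prod, Fin.val_zero, Emat_mul]
    have ih' := ih (fun m => w (m + 1))
    set A := ((List.finRange n).map (fun m : Fin n => Emat (n := n) (m : ℕ) (w (m + 1)))).prod
      with hA
    have hs : ∀ (i : ℕ) (j : Fin (n + 1)),
        (if h : i + 1 < n + 1 then lift1 A ⟨i + 1, h⟩ j else 0)
          = if (j : ℕ) = 0 then 0 else FF n (fun m => w (m + 1)) i ((j : ℕ) - 1) := by
      intro i j
      by_cases h : i + 1 < n + 1
      · rw [dif_pos h]
        have : (⟨i + 1, h⟩ : Fin (n + 1)) = Fin.succ ⟨i, by omega⟩ := rfl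
        rw [this]
        refine Fin.cases ?_ (fun j => ?_) j
        · simp [lift1]
        · simp [lift1, ih']
      · rw [dif_neg h, FF_row n _ i _ (by omega)]; simp
    rw [hs]
    refine Fin.cases ?_ (fun i => ?_) i <;> refine Fin.cases ?_ (fun j => ?_) j <;>
      simp [lift1, FF, ih']

noncomputable def ext0 {n : ℕ} (b : Matrix (Fin n) (Fin n) ℝ) (i j : ℕ) : ℝ :=
  if h : i < n ∧ j < n then b ⟨i, h.1⟩ ⟨j, h.2⟩ else 0

theorem Delta_eq {n : ℕ} (b : Matrix (Fin n) (Fin n) ℝ) (k s : ℕ) :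
    Delta b k (s + k) = DD (ext0 b) k s := by
  simp only [Delta, DD, ext0, Nat.add_sub_cancel]

theorem FF_col (N : ℕ) : ∀ w i j, N ≤ j → FF N w i j = 0 := by
  induction N with
  | zero => intro w i j _; rfl
  | succ N ih =>
    intro w i j h
    rcases j with _ | j
    · omega
    rcases i with _ | i
    · simp only [FF]
      exact ih _ _ _ (by omega)
    simp only [FF]
    rw [ih _ _ _ (by omega), ih _ _ _ (by omega)]; simp

/-- If `b` is upper triangular with all minors `Δ^m_k(b) > 0`
(`1 ≤ k ≤ m ≤ n`), then there are unique positive vectors `w^m ∈ ℝ^{n-m+1}` with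
`b = E_1(w^1) ⋯ E_n(w^n)`, and they are given explicitly in terms of the minors. -/
theorem stmt0 (n : ℕ) (hn : 1 ≤ n) (b : Matrix (Fin n) (Fin n) ℝ)
    (htri : ∀ i j : Fin n, j < i → b i j = 0)
    (hpos : ∀ k m : ℕ, 1 ≤ k → k ≤ m → m ≤ n → 0 < Delta b k m) :
    (∃! w : (m : Fin n) → Fin (n - (m : ℕ)) → ℝ,
      (∀ m i, 0 < w m i) ∧
      b = ((List.finRange n).map (fun (m : Fin n) =>
        Emat (n := n) (m : ℕ) (fun l => if h : l < n - (m : ℕ) then w m ⟨l, h⟩ else 0))).prod) ∧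
    (∀ w : (m : Fin n) → Fin (n - (m : ℕ)) → ℝ,
      (∀ m i, 0 < w m i) →
      b = ((List.finRange n).map (fun (m : Fin n) =>
        Emat (n := n) (m : ℕ) (fun l => if h : l < n - (m : ℕ) then w m ⟨l, h⟩ else 0))).prod →
      ∀ (m : Fin n) (i : Fin (n - (m : ℕ))),
        if (i : ℕ) = 0 then w m i = Delta b 1 ((m : ℕ) + 1)
        else w m i =
          Delta b ((i : ℕ) + 1) ((m : ℕ) + (i : ℕ) + 1) * Delta b ((i : ℕ) - 1) ((m : ℕ) + (i : ℕ)) /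
            (Delta b (i : ℕ) ((m : ℕ) + (i : ℕ) + 1) * Delta b (i : ℕ) ((m : ℕ) + (i : ℕ)))) := by
  have hpos' : ∀ k s, k + s ≤ n → 0 < DD (ext0 b) k s := by
    intro k s h
    rcases k with _ | k
    · rw [DD_zero]; exact one_pos
    rw [← Delta_eq]
    exact hpos _ _ (by omega) (by omega) (by omega)
  have key : ∀ w : (m : Fin n) → Fin (n - (m : ℕ)) → ℝ,
      b = ((List.finRange n).map (fun (m : Fin n) =>
        Emat (n := n) (m : ℕ) (fun l => if h : l < n - (m : ℕ) then w m ⟨l, h⟩ else 0))).prod →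
      ∀ m i, w m i = GG (ext0 b) m i := by
    intro w hb m i
    set W : ℕ → ℕ → ℝ := fun m l =>
      if hm : m < n then (if h : l < n - m then w ⟨m, hm⟩ ⟨l, h⟩ else 0) else 0 with hW
    have hX : ext0 b = FF n W := by
      funext i j
      unfold ext0
      split_ifs with h
      · rw [← prod_eq n W ⟨i, h.1⟩ ⟨j, h.2⟩, hb]
        simp [hW]
      · rcases Nat.lt_or_ge i n with h1 | h1
        · rw [FF_col]; omega
        · rw [FF_row]; omega
    have := FF_formula n W (by rw [← hX]; exact hpos') m i (by omega)
    rw [← hX] at this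
    rw [← this]
    simp [hW]
  refine ⟨?_, ?_⟩
  · obtain ⟨w, hw, hF⟩ := FF_exists n (ext0 b)
      (by
        intro i j hij
        unfold ext0
        split_ifs with h
        · exact htri _ _ hij
        · rfl)
      (by intro i j h; unfold ext0; rw [dif_neg]; omega)
      (by intro i j h; unfold ext0; rw [dif_neg]; omega) hpos'
    refine ⟨fun m i => w m i, ⟨fun m i => hw _ _ (by omega), ?_⟩, ?_⟩
    · have : ∀ m : Fin n, Emat (n := n) (m : ℕ)
          (fun l => if h : l < n - (m : ℕ) then w m ((⟨l, h⟩ : Fin (n - (m : ℕ))) : ℕ) else 0)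
          = Emat (n := n) (m : ℕ) (w m) := by
        intro m
        ext i j
        simp only [Emat, Matrix.of_apply]
        by_cases h : (i : ℕ) < m
        · simp [h]
        · have : (i : ℕ) - m < n - m := by omega
          simp [h, this]
      simp only [this]
      ext i j
      rw [prod_eq, hF]
      simp [ext0]
    · rintro w' ⟨_, hb⟩
      funext m i
      rw [key w' hb m i]
      have := FF_formula n w (by rw [hF]; exact hpos') m i (by omega)
      rw [this, hF]
  · intro w _ hb m i
    have := key w hb m i
    split_ifs with h
    · rw [this, Delta_eq]
      simp [GG, h]
    · rw [this]
      obtain ⟨i', hi'⟩ : ∃ i', (i : ℕ) = i' + 1 := ⟨(i : ℕ) - 1, by omega⟩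
      simp only [GG, hi']
      simp only [← Delta_eq]
      simp only [Nat.add_eq_zero_iff, one_ne_zero, and_false, if_false, Nat.add_sub_cancel]
      rw [show (m : ℕ) + 1 + i' = m + (i' + 1) by ring,
        show (m : ℕ) + 1 + (i' + 1) = m + (i' + 1) + 1 by ring,
        show (m : ℕ) + (i' + 1 + 1) = m + (i' + 1) + 1 by ring]
end

section
/- Let n ≥ 2 and let b be an n×n real upper triangular matrix with Δ^m_k(b) > 0 for all 1 ≤ k ≤ m ≤ n. Then there exists an upper unitriangular matrix U such that b·w̄_0 = L·D·U, where D is the diagonal matrix with D_{ii} = Δ^n_i(b)/Δ^n_{i−1}(b) for 1 ≤ i ≤ n, and L = L_1(u^1) L_2(u^2) ⋯ L_{n−1}(u^{n−1}) with u^m_i = (Δ^m_{i−1}(b) · Δ^{m+1}_{i+1}(b)) / (Δ^m_i(b) · Δ^{m+1}_i(b)) for 1 ≤ i ≤ m < n. -/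
/-- `l_{p+1}(a) = I_n + a f_{p+1}` (1-based index `i = p+1`): identity plus `a` in
entry `(p+2, p+1)` (1-based), i.e. `(p+1, p)` (0-based). -/
def lmat {n : ℕ} (p : ℕ) (a : ℝ) : Matrix (Fin n) (Fin n) ℝ :=
  1 + Matrix.of (fun i j : Fin n => if (i : ℕ) = p + 1 ∧ (j : ℕ) = p then a else 0)

/-- `L_m(u) = l_m(u_m) l_{m−1}(u_{m−1}) ⋯ l_1(u_1)`, where `u p` is the entry `u_{p+1}`. -/
def Lmat {n : ℕ} (m : ℕ) (u : ℕ → ℝ) : Matrix (Fin n) (Fin n) ℝ :=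
  (((List.range m).reverse).map (fun p => lmat (n := n) p (u p))).prod

/-- `w̄_0`: the matrix with entry `(−1)^{n−i}` in position `(i, n+1−i)` (1-based). -/
def wbar (n : ℕ) : Matrix (Fin n) (Fin n) ℝ :=
  Matrix.of fun i j : Fin n =>
    if (j : ℕ) = n - 1 - (i : ℕ) then (-1 : ℝ) ^ (n - 1 - (i : ℕ)) else 0

/-- Entry of a matrix by natural indices, extended by zero. -/
noncomputable def ent {n : ℕ} (b : Matrix (Fin n) (Fin n) ℝ) (i j : ℕ) : ℝ :=
  if h : i < n ∧ j < n then b ⟨i, h.1⟩ ⟨j, h.2⟩ else 0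

lemma ent_fin {n : ℕ} (b : Matrix (Fin n) (Fin n) ℝ) (i j : Fin n) : ent b i j = b i j := by
  simp [ent]

lemma Delta_eq_s1 {n : ℕ} (b : Matrix (Fin n) (Fin n) ℝ) (k c : ℕ) :
    Delta b k (c + k) = Matrix.det (Matrix.of fun i j : Fin k => ent b i (c + j)) := by
  unfold Delta ent
  simp only [Nat.add_sub_cancel]

lemma Delta_zero {n : ℕ} (b : Matrix (Fin n) (Fin n) ℝ) (m : ℕ) : Delta b 0 m = 1 := by
  unfold Delta; exact Matrix.det_fin_zero

/-- Expansion along the last row, only the last entry being nonzero. -/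
lemma Delta_last {n : ℕ} (M : Matrix (Fin n) (Fin n) ℝ) (k c : ℕ)
    (h : ∀ j < k, ent M k (c + j) = 0) :
    Delta M (k + 1) (c + (k + 1)) = ent M k (c + k) * Delta M k (c + k) := by
  rw [Delta_eq_s1, Delta_eq_s1, Matrix.det_succ_row _ (Fin.last k), Finset.sum_eq_single (Fin.last k)]
  · have : (-1 : ℝ) ^ (k + k) = 1 := Even.neg_one_pow ⟨k, rfl⟩
    simp only [Fin.val_last, this, Matrix.of_apply, one_mul]
    congr 2
    ext i j
    simp
  · intro j _ hj
    have : (j : ℕ) < k := by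
      have := j.2
      have h2 : (j : ℕ) ≠ k := fun h => hj (Fin.ext h)
      omega
    simp [h j this]
  · simp

/-- Expansion along the last row, only the first entry being nonzero. -/
lemma Delta_first {n : ℕ} (M : Matrix (Fin n) (Fin n) ℝ) (k c : ℕ)
    (h : ∀ j < k, ent M k (c + (j + 1)) = 0) :
    Delta M (k + 1) (c + (k + 1)) = (-1) ^ k * ent M k c * Delta M k (c + (k + 1)) := by
  rw [Delta_eq_s1, show c + (k + 1) = (c + 1) + k by ring, Delta_eq_s1,
    Matrix.det_succ_row _ (Fin.last k), Finset.sum_eq_single 0]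
  · simp only [Fin.val_last, Matrix.of_apply, Fin.val_zero, add_zero]
    congr 2
    ext i j
    have : c + ((j : ℕ) + 1) = c + 1 + j := by ring
    simp [this]
  · intro j _ hj
    obtain ⟨j', rfl⟩ := Fin.exists_succ_eq_of_ne_zero hj
    simp [h j' j'.2]
  · simp

/-- Bidiagonal row operations preserve the minors. -/
lemma Delta_rows {n : ℕ} (A B : Matrix (Fin n) (Fin n) ℝ) (c : ℕ → ℝ)
    (h0 : ∀ j, ent A 0 j = ent B 0 j)
    (hs : ∀ i j, i + 1 < n → ent A (i + 1) j = ent B (i + 1) j + c i * ent A i j)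
    (k m : ℕ) (hk : k ≤ n) : Delta A k m = Delta B k m := by
  cases k with
  | zero => rw [Delta_zero, Delta_zero]
  | succ k =>
    apply Matrix.det_eq_of_forall_row_eq_smul_add_pred (fun i => c i)
    · intro j
      exact h0 _
    · intro i j
      have := hs i (m - (k + 1) + j) (by omega)
      exact this

lemma lmat_mul {n : ℕ} (p : ℕ) (a : ℝ) (M : Matrix (Fin n) (Fin n) ℝ) (i j : Fin n) :
    (lmat (n := n) p a * M) i j =
      M i j + if (i : ℕ) = p + 1 then a * ent M p j else 0 := by
  unfold lmat
  rw [add_mul, one_mul, Matrix.add_apply]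
  congr 1
  rw [Matrix.mul_apply]
  split_ifs with h
  · have hp : p < n := by omega
    rw [Finset.sum_eq_single ⟨p, hp⟩]
    · simp [h, ent, hp]
    · intro x _ hx
      have : (x : ℕ) ≠ p := fun h => hx (Fin.ext h)
      simp [this]
    · simp
  · simp [h]

lemma Lmat_succ {n : ℕ} (m : ℕ) (u : ℕ → ℝ) :
    Lmat (n := n) (m + 1) u = lmat m (u m) * Lmat m u := by
  simp [Lmat, List.range_succ]

lemma Lmat_mul {n : ℕ} (u : ℕ → ℝ) (A B : Matrix (Fin n) (Fin n) ℝ) (q : ℕ)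
    (h0 : ∀ j, ent A 0 j = ent B 0 j)
    (hs : ∀ i j, i < q → i + 1 < n → ent A (i + 1) j = ent B (i + 1) j + u i * ent A i j) :
    ∀ m ≤ q, ∀ i j : Fin n, (Lmat (n := n) m u * B) i j =
      if (i : ℕ) ≤ m then A i j else B i j := by
  intro m
  induction m with
  | zero =>
    intro _ i j
    simp only [Lmat, List.range_zero, List.reverse_nil, List.map_nil, List.prod_nil, one_mul]
    split_ifs with h
    · have := h0 j
      rw [← ent_fin A, ← ent_fin B, show (i : ℕ) = 0 by omega, this]
    · rfl
  | succ m ih =>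
    intro hm i j
    rw [Lmat_succ, Matrix.mul_assoc, lmat_mul, ih (by omega)]
    by_cases hi : (i : ℕ) = m + 1
    · have hmn : m < n := by omega
      have e : ent (Lmat (n := n) m u * B) m j = ent A m j := by
        have := ih (by omega) ⟨m, hmn⟩ j
        simp only [le_refl, if_true] at this
        rw [← ent_fin (Lmat (n := n) m u * B), ← ent_fin A] at this
        exact this
      have h1 := hs m j (by omega) (by omega)
      rw [e, if_neg (by omega), if_pos hi, if_pos (by omega), ← ent_fin A, ← ent_fin B, hi, h1]
    · rw [if_neg hi, add_zero]
      by_cases h2 : (i : ℕ) ≤ m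
      · rw [if_pos h2, if_pos (by omega)]
      · rw [if_neg h2, if_neg (by omega)]

lemma mul_wbar {n : ℕ} (M : Matrix (Fin n) (Fin n) ℝ) (i j : Fin n) :
    (M * wbar n) i j = ent M i (n - 1 - j) * (-1) ^ (j : ℕ) := by
  have hj := j.2
  rw [Matrix.mul_apply, Finset.sum_eq_single ⟨n - 1 - j, by omega⟩]
  · rw [← ent_fin M]
    simp only [wbar, Matrix.of_apply]
    rw [if_pos (by omega), show n - 1 - (n - 1 - (j : ℕ)) = j by omega]
  · intro x _ hx
    have hx2 := x.2
    have : (j : ℕ) ≠ n - 1 - (x : ℕ) := fun h => hx (Fin.ext (by simp; omega))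
    simp [wbar, this]
  · simp

/-- The parameters. -/
noncomputable def upar {n : ℕ} (b : Matrix (Fin n) (Fin n) ℝ) (q p : ℕ) : ℝ :=
  Delta b p (q + 1) * Delta b (p + 2) (q + 2) /
              (Delta b (p + 1) (q + 1) * Delta b (p + 1) (q + 2))

lemma stages {n : ℕ} (b : Matrix (Fin n) (Fin n) ℝ)
    (htri : ∀ i j : Fin n, j < i → b i j = 0)
    (hpos : ∀ k m : ℕ, 1 ≤ k → k ≤ m → m ≤ n → 0 < Delta b k m) (q : ℕ) (hq : q < n) :
    ∃ M : Matrix (Fin n) (Fin n) ℝ,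
      b = (((List.range q).map (fun q => Lmat (n := n) (q + 1) (upar b q))).prod) * M ∧
      (∀ k m, k ≤ n → Delta M k m = Delta b k m) ∧
      (∀ i j, j ≤ q → q < i + j → ent M i j = 0) ∧
      (∀ i j, q < i → j < i → ent M i j = 0) := by
  induction q with
  | zero =>
    have ht : ∀ i j, j < i → ent b i j = 0 := by
      intro i j hij
      unfold ent
      split_ifs with h
      · exact htri _ _ hij
      · rfl
    exact ⟨b, by simp, fun _ _ _ => rfl, fun i j h1 h2 => ht _ _ (by omega),
      fun i j _ h => ht _ _ h⟩
  | succ q ih =>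
    obtain ⟨M, hb, hD, hz, ht⟩ := ih (by omega)
    let c : ℕ → ℝ := fun p => if p < q + 1 then upar b q p else 0
    let B : Matrix (Fin n) (Fin n) ℝ := Matrix.of fun i j =>
      M i j - if (i : ℕ) = 0 then 0 else c (i - 1) * ent M (i - 1) j
    have hB : ∀ i j, i < n → j < n → ent B i j =
        ent M i j - if i = 0 then 0 else c (i - 1) * ent M (i - 1) j := by
      intro i j hi hj
      simp only [ent, hi, hj, and_self, dif_pos]
      simp [B, ent, hj]
    have hout : ∀ (A : Matrix (Fin n) (Fin n) ℝ) i j, ¬ (i < n ∧ j < n) → ent A i j = 0 := by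
      intro A i j h
      simp only [ent, dif_neg h]
    have h0 : ∀ j, ent M 0 j = ent B 0 j := by
      intro j
      by_cases hj : j < n
      · rw [hB 0 j (by omega) hj]; simp
      · rw [hout _ _ _ (by omega), hout _ _ _ (by omega)]
    have hs : ∀ i j, i + 1 < n → ent M (i + 1) j = ent B (i + 1) j + c i * ent M i j := by
      intro i j hi
      by_cases hj : j < n
      · rw [hB _ j hi hj]; simp
      · rw [hout _ _ _ (by omega), hout _ _ _ (by omega), hout _ _ _ (by omega)]; simp
    refine ⟨B, ?_, ?_, ?_, ?_⟩
    · rw [List.range_succ, List.map_append, List.prod_append, List.map_singleton,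
        List.prod_singleton, Matrix.mul_assoc]
      have : Lmat (n := n) (q + 1) (upar b q) * B = M := by
        ext i j
        rw [Lmat_mul (upar b q) M B (q + 1) h0 _ (q + 1) le_rfl]
        · split_ifs with h
          · rfl
          · have h1 := hB i j i.2 j.2
            rw [ent_fin, ent_fin] at h1
            have : c (i - 1) = 0 := if_neg (by omega)
            rw [h1, this]; simp
        · intro i j hi hin
          have := hs i j hin
          rw [this]
          simp only [c, if_pos hi]
      rw [this]
      exact hb
    · intro k m hk
      rw [← hD k m hk]
      exact (Delta_rows M B c h0 hs k m hk).symm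
    · intro i j hj hij
      by_cases hin : i < n
      swap
      · exact hout _ _ _ (by omega)
      rw [hB i j hin (by omega), if_neg (by omega)]
      obtain ⟨p, rfl⟩ : ∃ p, i = p + 1 := ⟨i - 1, by omega⟩
      simp only [Nat.add_sub_cancel]
      by_cases hp : p < q + 1
      swap
      · have : c p = 0 := if_neg hp
        rw [this, ht _ _ (by omega) (by omega)]; simp
      by_cases hjq : j ≤ q
      · rw [hz _ _ hjq (by omega), hz _ _ hjq (by omega)]; simp
      obtain rfl : j = q + 1 := by omega
      obtain ⟨d, rfl⟩ : ∃ d, q = d + p := ⟨q - p, by omega⟩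
      have e1 := Delta_last M (p + 1) d (fun j hj => hz _ _ (by omega) (by omega))
      have e2 := Delta_last M p (d + 1) (fun j hj => hz _ _ (by omega) (by omega))
      rw [hD _ _ (by omega), hD _ _ (by omega)] at e1 e2
      have p1 := hpos (p + 1) (d + p + 1) (by omega) (by omega) (by omega)
      have p2 := hpos (p + 1) (d + p + 2) (by omega) (by omega) (by omega)
      simp only [c, if_pos hp, upar]
      rw [show d + (p + 1 + 1) = d + p + 2 by ring, show d + (p + 1) = d + p + 1 by ring] at e1
      rw [show d + 1 + (p + 1) = d + p + 2 by ring, show d + 1 + p = d + p + 1 by ring] at e2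
      rw [e1, sub_eq_zero, div_mul_eq_mul_div, eq_div_iff (by positivity), e2]
      ring
    · intro i j hi hj
      by_cases hin : i < n
      swap
      · exact hout _ _ _ (by omega)
      rw [hB i j hin (by omega), if_neg (by omega)]
      have : c (i - 1) = 0 := if_neg (by omega)
      rw [this, ht _ _ (by omega) hj]; simp

/-- Gauss (LDU) decomposition of `b·w̄_0` for a totally positive
upper triangular matrix `b`, with explicit `L` and `D` in terms of the minors of `b`. -/
theorem stmt1 (n : ℕ) (hn : 2 ≤ n) (b : Matrix (Fin n) (Fin n) ℝ)
    (htri : ∀ i j : Fin n, j < i → b i j = 0)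
    (hpos : ∀ k m : ℕ, 1 ≤ k → k ≤ m → m ≤ n → 0 < Delta b k m) :
    ∃ U : Matrix (Fin n) (Fin n) ℝ,
      (∀ i : Fin n, U i i = 1) ∧ (∀ i j : Fin n, j < i → U i j = 0) ∧
      b * wbar n =
        (((List.range (n - 1)).map (fun q => Lmat (n := n) (q + 1) (fun p =>
            Delta b p (q + 1) * Delta b (p + 2) (q + 2) /
              (Delta b (p + 1) (q + 1) * Delta b (p + 1) (q + 2))))).prod) *
          Matrix.diagonal (fun i : Fin n => Delta b ((i : ℕ) + 1) n / Delta b (i : ℕ) n) * U := by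
  obtain ⟨M, hb, hD, hz, -⟩ := stages b htri hpos (n - 1) (by omega)
  have hp : ∀ k ≤ n, 0 < Delta b k n := by
    intro k hk
    rcases Nat.eq_zero_or_pos k with rfl | h
    · rw [Delta_zero]; exact one_pos
    · exact hpos k n h hk le_rfl
  set d : Fin n → ℝ := fun i : Fin n => Delta b ((i : ℕ) + 1) n / Delta b (i : ℕ) n with hd
  have hd0 : ∀ i, d i ≠ 0 := fun i =>
    (div_pos (hp _ (by omega)) (hp _ (by omega))).ne'
  refine ⟨Matrix.diagonal (fun i => (d i)⁻¹) * (M * wbar n), ?_, ?_, ?_⟩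
  · intro i
    rw [Matrix.diagonal_mul, mul_wbar]
    obtain ⟨c, hc⟩ : ∃ c, n = c + ((i : ℕ) + 1) := ⟨n - (i + 1), by omega⟩
    have e := Delta_first M i c (fun j hj => hz _ _ (by omega) (by omega))
    rw [← hc, hD _ _ (by omega), hD _ _ (by omega)] at e
    rw [show n - 1 - (i : ℕ) = c by omega, inv_mul_eq_one₀ (hd0 i), hd]
    simp only
    rw [div_eq_iff (hp _ (by omega)).ne', e]
    ring
  · intro i j hij
    rw [Matrix.diagonal_mul, mul_wbar, hz _ _ (by omega) (by omega)]
    simp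
  · have h1 : Matrix.diagonal d * Matrix.diagonal (fun i => (d i)⁻¹) = 1 := by
      rw [Matrix.diagonal_mul_diagonal, ← Matrix.diagonal_one]
      congr 1
      ext i
      exact mul_inv_cancel₀ (hd0 i)
    rw [Matrix.mul_assoc, ← Matrix.mul_assoc (Matrix.diagonal d), h1, Matrix.one_mul,
      ← Matrix.mul_assoc]
    congr 1
end

section
/- For all 1 ≤ k ≤ m ≤ n and t > 0, Δ^m_k(b(t)) = ∫_{Ω^m_k(t)} e^{E_η(φ_1)+⋯+E_η(φ_k)} dφ_1⋯dφ_k, where Ω^m_k(t) is the set of k-tuples (φ_1,…,φ_k) with φ_r ∈ Ω_{r, m−k+r}(t) for 1 ≤ r ≤ k, whose associated step functions satisfy φ_1(u) < φ_2(u) < ⋯ < φ_k(u) for every u ∈ [0,t] (that is, k non-intersecting down-right paths starting at heights m−k+1,…,m at time 0 and ending at heights 1,…,k at time t), and the integral is with respect to Lebesgue measure on this set. -/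
open MeasureTheory

/-- `Ω_{ij}(t)` for a path with `d = j - i` jump times, parametrised in increasing order:
`u 0 = s_{j-1} < u 1 = s_{j-2} < ⋯ < u (d-1) = s_i`, all lying in `(0, t)`. -/
def chainSet (d : ℕ) (t : ℝ) : Set (Fin d → ℝ) :=
  {u | StrictMono u ∧ ∀ l, u l ∈ Set.Ioo (0 : ℝ) t}

/-- The energy `E_η(φ)` of the down-right path from level `j` (at time `0`) to level `i`
(at time `t`), with jump times `u 0 < u 1 < ⋯ < u (j-i-1)` (so `u l = s_{j-1-l}`, with the
convention `s_{i-1} = t`):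
`E_η(φ) = η_j(s_{j-1}) + Σ_{l=i}^{j-1} (η_l(s_{l-1}) − η_l(s_l))`.
When `i = j` this is `η_i(t)`. -/
noncomputable def pathE (η : ℝ → ℕ → ℝ) (i j : ℕ) (t : ℝ) (u : ℕ → ℝ) : ℝ :=
  let v : ℕ → ℝ := fun l => if l < j - i then u l else t
  η (v 0) j + ∑ r ∈ Finset.range (j - i),
    (η (v (j - i - r)) (i + r) - η (v (j - i - 1 - r)) (i + r))

/-- The matrix `b(t)` of the continuous-time geometric RSK correspondence:
`b_{ii}(t) = e^{η_i(t)}`, `b_{ij}(t) = ∫_{Ω_{ij}(t)} e^{E_η(φ)} dφ` for `i < j`,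
and `b_{ij}(t) = 0` for `i > j` (indices `1,…,n`; row `p` of the Lean matrix is row `p+1`). -/
noncomputable def grsk (n : ℕ) (η : ℝ → ℕ → ℝ) (t : ℝ) : Matrix (Fin n) (Fin n) ℝ :=
  Matrix.of fun i j : Fin n =>
    if (i : ℕ) = (j : ℕ) then Real.exp (η t ((i : ℕ) + 1))
    else if (i : ℕ) < (j : ℕ) then
      ∫ u in chainSet ((j : ℕ) - (i : ℕ)) t,
        Real.exp (pathE η ((i : ℕ) + 1) ((j : ℕ) + 1) t
          (fun l => if h : l < (j : ℕ) - (i : ℕ) then u ⟨l, h⟩ else 0))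
    else 0

/-- The step function associated to the down-right path starting at level `j` with `d`
jump times `u`: its value at time `s` is `j` minus the number of jump times `≤ s`. -/
noncomputable def pathStep (j d : ℕ) (u : Fin d → ℝ) (s : ℝ) : ℕ :=
  j - (Finset.univ.filter (fun l : Fin d => u l ≤ s)).card

/-- `Ω^m_k(t)`: the set of `k`-tuples of non-intersecting down-right paths, the `r`-th
path (`r = 1,…,k`) going from level `m−k+r` at time `0` to level `r` at time `t`
(so each has `m−k` jump times), whose step functions are strictly increasing in `r`
at every time `s ∈ [0,t]`. -/
def nonint (m k : ℕ) (t : ℝ) : Set (Fin k → Fin (m - k) → ℝ) :=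
  {φ | (∀ r, φ r ∈ chainSet (m - k) t) ∧
    ∀ s ∈ Set.Icc (0 : ℝ) t, ∀ r r' : Fin k, r < r' →
      pathStep (m - k + (r : ℕ) + 1) (m - k) (φ r) s <
        pathStep (m - k + (r' : ℕ) + 1) (m - k) (φ r') s}


set_option linter.unusedSectionVars false

namespace KM

section poset
variable {α : Type*} [Fintype α] [DecidableEq α] [PartialOrder α]

/-- Standard fillings of `S` with values in `(0,t)`. -/
def std (S : Finset α) (t : ℝ) : Set (α → ℝ) :=
  {u | (∀ c ∈ S, 0 < u c ∧ u c < t) ∧ (∀ c ∈ S, ∀ c' ∈ S, c ≠ c' → u c ≠ u c') ∧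
    ∀ c ∈ S, ∀ c' ∈ S, c < c' → u c < u c'}

open Classical in
noncomputable def ff (W : α → ℝ → ℝ) (S : Finset α) (t : ℝ) (u : α → ℝ) : ENNReal :=
  if u ∈ std S t then ∏ c ∈ S, ENNReal.ofReal (W c (u c)) else 0

noncomputable def FF (W : α → ℝ → ℝ) (S : Finset α) (t : ℝ) : ENNReal :=
  lmarginal (fun _ : α => (volume : Measure ℝ)) S (ff W S t) 0

lemma ff_congr (W : α → ℝ → ℝ) (S : Finset α) (t : ℝ) {u v : α → ℝ} (h : ∀ c ∈ S, u c = v c) :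
    ff W S t u = ff W S t v := by
  have h1 : u ∈ std S t ↔ v ∈ std S t := by
    simp only [std, Set.mem_ofPred_eq]
    refine and_congr ?_ (and_congr ?_ ?_)
    · exact forall₂_congr fun c hc => by rw [h c hc]
    · exact forall₄_congr fun c hc c' hc' => by rw [h c hc, h c' hc']
    · exact forall₄_congr fun c hc c' hc' => by rw [h c hc, h c' hc']
  unfold ff
  by_cases hu : u ∈ std S t
  · rw [if_pos hu, if_pos (h1.1 hu)]
    exact Finset.prod_congr rfl fun c hc => by rw [h c hc]
  · rw [if_neg hu, if_neg (fun h => hu (h1.2 h))]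

lemma lmarginal_ff (W : α → ℝ → ℝ) (S : Finset α) (t : ℝ) (x : α → ℝ) :
    lmarginal (fun _ : α => (volume : Measure ℝ)) S (ff W S t) x = FF W S t := by
  unfold FF lmarginal
  refine lintegral_congr fun y => ff_congr W S t fun c hc => ?_
  simp [Function.updateFinset, hc]

lemma std_meas (S : Finset α) : MeasurableSet {p : ℝ × (α → ℝ) | p.2 ∈ std S p.1} := by
  have hm : ∀ c : α, Measurable fun p : ℝ × (α → ℝ) => p.2 c := fun c =>
    (measurable_pi_apply c).comp measurable_snd
  simp only [std, Set.mem_ofPred_eq]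
  rw [measurableSet_setOfPred]
  refine Measurable.and ?_ (Measurable.and ?_ ?_)
  · refine Measurable.forall fun c => Measurable.imp measurable_const ?_
    exact (measurableSet_setOfPred.1 (measurableSet_lt measurable_const (hm c))).and
      (measurableSet_setOfPred.1 (measurableSet_lt (hm c) measurable_fst))
  · refine Measurable.forall fun c => Measurable.imp measurable_const ?_
    refine Measurable.forall fun c' => Measurable.imp measurable_const ?_
    refine Measurable.imp measurable_const ?_
    exact (measurableSet_setOfPred.1 (measurableSet_eq_fun (hm c) (hm c'))).not
  · refine Measurable.forall fun c => Measurable.imp measurable_const ?_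
    refine Measurable.forall fun c' => Measurable.imp measurable_const ?_
    refine Measurable.imp measurable_const ?_
    exact measurableSet_setOfPred.1 (measurableSet_lt (hm c) (hm c'))

lemma ff_meas (W : α → ℝ → ℝ) (hW : ∀ c, Continuous (W c)) (S : Finset α) :
    Measurable fun p : ℝ × (α → ℝ) => ff W S p.1 p.2 := by
  unfold ff
  refine Measurable.ite (std_meas S) ?_ measurable_const
  refine Finset.measurable_prod _ fun c _ => ?_
  exact ((hW c).measurable.comp ((measurable_pi_apply c).comp measurable_snd)).ennreal_ofReal

/-- the term of the decomposition in which `c` carries the largest value -/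
noncomputable def gg (W : α → ℝ → ℝ) (S : Finset α) (t : ℝ) (c : α) (u : α → ℝ) : ENNReal :=
  (Set.Ioo 0 t).indicator (fun s => ENNReal.ofReal (W c s)) (u c) * ff W (S.erase c) (u c) u

lemma gg_meas (W : α → ℝ → ℝ) (hW : ∀ c, Continuous (W c)) (S : Finset α) (t : ℝ) (c : α) :
    Measurable (gg W S t c) := by
  unfold gg
  refine Measurable.mul ?_ ?_
  · exact ((hW c).measurable.ennreal_ofReal.indicator measurableSet_Ioo).comp (measurable_pi_apply c)
  · exact (ff_meas W hW (S.erase c)).comp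
      (g := fun p : ℝ × (α → ℝ) => ff W (S.erase c) p.1 p.2) (f := fun u : α → ℝ => (u c, u))
      ((measurable_pi_apply c).prodMk measurable_id)

open Classical in
lemma ff_decomp (W : α → ℝ → ℝ) (S : Finset α) (hS : S.Nonempty) (t : ℝ) (u : α → ℝ) :
    ff W S t u = ∑ c ∈ S.filter (fun c => ∀ c' ∈ S, ¬ c < c'), gg W S t c u := by
  have hz : ∀ c, ¬ (u c ∈ Set.Ioo 0 t ∧ u ∈ std (S.erase c) (u c)) → gg W S t c u = 0 := by
    intro c hc
    unfold gg ff
    by_cases h1 : u c ∈ Set.Ioo 0 t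
    · have : u ∉ std (S.erase c) (u c) := fun h => hc ⟨h1, h⟩
      simp [this]
    · simp [h1]
  by_cases hu : u ∈ std S t
  · obtain ⟨c, hc, hmax⟩ := S.exists_max_image u hS
    obtain ⟨h1, h2, h3⟩ := hu
    have hlt : ∀ c' ∈ S, c' ≠ c → u c' < u c := fun c' hc' hne =>
      lt_of_le_of_ne (hmax c' hc') (h2 c' hc' c hc hne)
    have hcm : c ∈ S.filter (fun c => ∀ c' ∈ S, ¬ c < c') := by
      simp only [Finset.mem_filter]
      exact ⟨hc, fun c' hc' hlt' => absurd (h3 c hc c' hc' hlt') (not_lt.2 (hmax c' hc'))⟩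
    rw [Finset.sum_eq_single_of_mem c hcm]
    · have hs : u ∈ std (S.erase c) (u c) := by
        refine ⟨fun a ha => ?_, fun a ha b hb => h2 a (Finset.mem_of_mem_erase ha) b
          (Finset.mem_of_mem_erase hb), fun a ha b hb => h3 a (Finset.mem_of_mem_erase ha) b
          (Finset.mem_of_mem_erase hb)⟩
        rw [Finset.mem_erase] at ha
        exact ⟨(h1 a ha.2).1, hlt a ha.2 ha.1⟩
      have hi : u c ∈ Set.Ioo 0 t := h1 c hc
      have hu : u ∈ std S t := ⟨h1, h2, h3⟩
      unfold gg ff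
      rw [if_pos hu, if_pos hs, Set.indicator_of_mem hi,
        Finset.mul_prod_erase S (fun c => ENNReal.ofReal (W c (u c))) hc]
    · intro b hb hbc
      apply hz
      rintro ⟨-, hb2⟩
      have := (hb2.1 c (Finset.mem_erase.2 ⟨hbc.symm, hc⟩)).2
      exact absurd this (not_lt.2 (hmax b (Finset.mem_filter.1 hb).1))
  · have : ff W S t u = 0 := by unfold ff; rw [if_neg hu]
    rw [this, eq_comm]
    refine Finset.sum_eq_zero fun c hc => hz c ?_
    rintro ⟨hi, h1, h2, h3⟩
    obtain ⟨hc, hm⟩ := Finset.mem_filter.1 hc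
    have h1' : ∀ a ∈ S, a ≠ c → u a < u c := fun a ha hne => (h1 a (Finset.mem_erase.2 ⟨hne, ha⟩)).2
    apply hu
    refine ⟨fun a ha => ?_, fun a ha b hb hab => ?_, fun a ha b hb hab => ?_⟩
    · by_cases hac : a = c
      · rw [hac]; exact hi
      · exact ⟨(h1 a (Finset.mem_erase.2 ⟨hac, ha⟩)).1, (h1' a ha hac).trans hi.2⟩
    · by_cases hac : a = c
      · subst hac; exact (h1' b hb hab.symm).ne'
      · by_cases hbc : b = c
        · subst hbc; exact (h1' a ha hab).ne
        · exact h2 a (Finset.mem_erase.2 ⟨hac, ha⟩) b (Finset.mem_erase.2 ⟨hbc, hb⟩) hab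
    · by_cases hac : a = c
      · subst hac; exact absurd hab (hm b hb)
      · by_cases hbc : b = c
        · subst hbc; exact (h1' a ha hab.ne)
        · exact h3 a (Finset.mem_erase.2 ⟨hac, ha⟩) b (Finset.mem_erase.2 ⟨hbc, hb⟩) hab

open Classical in
lemma FF_rec (W : α → ℝ → ℝ) (hW : ∀ c, Continuous (W c)) (S : Finset α) (hS : S.Nonempty)
    (t : ℝ) :
    FF W S t = ∑ c ∈ S.filter (fun c => ∀ c' ∈ S, ¬ c < c'),
      ∫⁻ s in Set.Ioo 0 t, ENNReal.ofReal (W c s) * FF W (S.erase c) s := by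
  have h0 : FF W S t = ∑ c ∈ S.filter (fun c => ∀ c' ∈ S, ¬ c < c'),
      lmarginal (fun _ : α => (volume : Measure ℝ)) S (gg W S t c) 0 := by
    unfold FF lmarginal
    rw [← lintegral_finsetSum]
    · exact lintegral_congr fun y => ff_decomp W S hS t _
    · intro c hc
      exact (gg_meas W hW S t c).comp measurable_updateFinset
  rw [h0]
  refine Finset.sum_congr rfl fun c hc => ?_
  have hc := (Finset.mem_filter.1 hc).1
  rw [lmarginal_erase _ (gg_meas W hW S t c) hc, ← lintegral_indicator measurableSet_Ioo]
  refine lintegral_congr fun s => ?_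
  have h2 : lmarginal (fun _ : α => (volume : Measure ℝ)) (S.erase c) (gg W S t c)
      (Function.update 0 c s) =
      (Set.Ioo 0 t).indicator (fun s => ENNReal.ofReal (W c s)) s *
        lmarginal (fun _ : α => (volume : Measure ℝ)) (S.erase c) (ff W (S.erase c) s)
          (Function.update 0 c s) := by
    unfold lmarginal
    rw [← lintegral_const_mul]
    · refine lintegral_congr fun y => ?_
      have : Function.updateFinset (Function.update (0 : α → ℝ) c s) (S.erase c) y c = s := by
        simp [Function.updateFinset]
      simp only [gg, this]
    · exact (ff_meas W hW (S.erase c)).comp (measurable_const.prodMk measurable_updateFinset)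
  rw [h2, lmarginal_ff]
  by_cases hs : s ∈ Set.Ioo 0 t <;> simp [hs]

lemma FF_empty (W : α → ℝ → ℝ) (t : ℝ) : FF W ∅ t = 1 := by
  simp [FF, ff, std]

lemma FF_univ (W : α → ℝ → ℝ) (t : ℝ) : FF W Finset.univ t = ∫⁻ u, ff W Finset.univ t u := by
  simp only [FF, lmarginal_univ]; rfl

end poset
end KM

namespace KM

/-- iterated integrals: `AA w d i` is the normalised entry `a_{i,i+d}` -/
noncomputable def AA (w : ℕ → ℝ → ℝ) : ℕ → ℕ → ℝ → ℝ
  | 0, _ => fun _ => 1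
  | d + 1, i => fun t => ∫ s in (0 : ℝ)..t, w i s * AA w d (i + 1) s

lemma AA_cont (w : ℕ → ℝ → ℝ) (hw : ∀ h, Continuous (w h)) (d i : ℕ) : Continuous (AA w d i) := by
  induction d generalizing i with
  | zero => exact continuous_const
  | succ d ih =>
    have hc : Continuous fun s => w i s * AA w d (i + 1) s := (hw i).mul (ih _)
    exact intervalIntegral.continuous_primitive (fun a b => hc.intervalIntegrable a b) 0

lemma AA_shift (w : ℕ → ℝ → ℝ) (i d h : ℕ) : AA (fun h => w (h + i)) d h = AA w d (h + i) := by
  induction d generalizing h with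
  | zero => rfl
  | succ d ih =>
    funext t
    simp only [AA, ih, Nat.add_right_comm]

noncomputable def aa (w : ℕ → ℝ → ℝ) (i j : ℕ) (t : ℝ) : ℝ :=
  if i ≤ j then AA w (j - i) i t else 0

lemma aa_deriv (w : ℕ → ℝ → ℝ) (hw : ∀ h, Continuous (w h)) (i j : ℕ) (t : ℝ) :
    HasDerivAt (aa w i j) (w i t * aa w (i + 1) j t) t := by
  rcases lt_trichotomy i j with h | h | h
  · obtain ⟨d, rfl⟩ : ∃ d, j = i + d + 1 := ⟨j - i - 1, by omega⟩
    have e1 : aa w i (i + d + 1) = fun t => ∫ s in (0 : ℝ)..t, w i s * AA w d (i + 1) s := by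
      funext t
      have : i + d + 1 - i = d + 1 := by omega
      simp only [aa, this, AA]
      rw [if_pos (by omega)]
    have e2 : aa w (i + 1) (i + d + 1) t = AA w d (i + 1) t := by
      have : i + d + 1 - (i + 1) = d := by omega
      simp only [aa, this]
      rw [if_pos (by omega)]
    rw [e1, e2]
    have hc : Continuous fun s => w i s * AA w d (i + 1) s := (hw i).mul (AA_cont w hw _ _)
    exact intervalIntegral.integral_hasDerivAt_right (hc.intervalIntegrable _ _)
      (hc.stronglyMeasurableAtFilter _ _) hc.continuousAt
  · subst h
    have e1 : aa w i i = fun _ => 1 := by funext t; simp [aa, AA]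
    have e2 : aa w (i + 1) i t = 0 := by simp [aa]
    rw [e1, e2, mul_zero]; exact hasDerivAt_const _ _
  · have e1 : aa w i j = fun _ => 0 := by funext t; simp only [aa]; rw [if_neg (by omega)]
    have e2 : aa w (i + 1) j t = 0 := by simp only [aa]; rw [if_neg (by omega)]
    rw [e1, e2, mul_zero]; exact hasDerivAt_const _ _

lemma aa_self (w : ℕ → ℝ → ℝ) (i : ℕ) (t : ℝ) : aa w i i t = 1 := by simp [aa, AA]
lemma aa_gt (w : ℕ → ℝ → ℝ) (i j : ℕ) (t : ℝ) (h : j < i) : aa w i j t = 0 := by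
  simp only [aa]; rw [if_neg (by omega)]
lemma aa_zero (w : ℕ → ℝ → ℝ) (i j : ℕ) (h : i < j) : aa w i j 0 = 0 := by
  obtain ⟨d, rfl⟩ : ∃ d, j = i + d + 1 := ⟨j - i - 1, by omega⟩
  have : i + d + 1 - i = d + 1 := by omega
  simp only [aa, this, AA]
  simp

lemma det_deriv {k : ℕ} (M M' : ℝ → Matrix (Fin k) (Fin k) ℝ) (t : ℝ)
    (h : ∀ i j, HasDerivAt (fun s => M s i j) (M' t i j) t) :
    HasDerivAt (fun s => (M s).det) (∑ r, ((M t).updateRow r (M' t r)).det) t := by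
  have h1 : HasDerivAt (fun s => ∑ σ : Equiv.Perm (Fin k), ((Equiv.Perm.sign σ : ℤ) : ℝ) *
      ∏ i, M s i (σ i)) (∑ σ : Equiv.Perm (Fin k), ((Equiv.Perm.sign σ : ℤ) : ℝ) *
      ∑ r, (∏ j ∈ Finset.univ.erase r, M t j (σ j)) • M' t r (σ r)) t := by
    refine HasDerivAt.fun_sum fun σ _ => HasDerivAt.const_mul _ ?_
    exact HasDerivAt.fun_finsetProd fun i _ => h i (σ i)
  have e1 : (fun s => (M s).det) = (fun s => ∑ σ : Equiv.Perm (Fin k),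
      ((Equiv.Perm.sign σ : ℤ) : ℝ) * ∏ i, M s i (σ i)) := by
    funext s
    rw [← Matrix.det_transpose, Matrix.det_apply']; rfl
  rw [e1]
  convert h1 using 1
  simp only [Finset.mul_sum]
  rw [Finset.sum_comm]
  refine Finset.sum_congr rfl fun r _ => ?_
  rw [← Matrix.det_transpose, Matrix.det_apply']
  refine Finset.sum_congr rfl fun σ _ => ?_
  congr 1
  rw [← Finset.mul_prod_erase _ _ (Finset.mem_univ r), mul_comm, smul_eq_mul]
  congr 1
  · refine Finset.prod_congr rfl fun j hj => ?_
    simp [Matrix.updateRow_ne (Finset.ne_of_mem_erase hj)]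
  · simp

noncomputable def DD (w : ℕ → ℝ → ℝ) (k d : ℕ) (I : Fin k → ℕ) (t : ℝ) : ℝ :=
  (Matrix.of fun r c : Fin k => aa w (I r) (d + c) t).det

lemma DD_deriv (w : ℕ → ℝ → ℝ) (hw : ∀ h, Continuous (w h)) (k d : ℕ) (I : Fin k → ℕ) (t : ℝ) :
    HasDerivAt (DD w k d I)
      (∑ r, w (I r) t * DD w k d (Function.update I r (I r + 1)) t) t := by
  have := det_deriv (fun s => Matrix.of fun r c : Fin k => aa w (I r) (d + c) s)
    (fun s => Matrix.of fun r c : Fin k => w (I r) s * aa w (I r + 1) (d + c) s) t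
    (fun i j => aa_deriv w hw _ _ _)
  convert! this using 1
  refine Finset.sum_congr rfl fun r _ => ?_
  have e : (Matrix.of fun r c : Fin k => w (I r) t * aa w (I r + 1) (d + c) t) r =
    w (I r) t • (fun c : Fin k => aa w (I r + 1) (d + c) t) := by
    funext c; simp
  rw [e, Matrix.det_updateRow_smul]
  unfold DD
  congr 2
  ext a b
  by_cases h : a = r
  · subst h; simp
  · simp [h]

lemma DD_cont (w : ℕ → ℝ → ℝ) (hw : ∀ h, Continuous (w h)) (k d : ℕ) (I : Fin k → ℕ) :
    Continuous (DD w k d I) :=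
  continuous_iff_continuousAt.2 fun t => (DD_deriv w hw k d I t).continuousAt

lemma DD_noninj (w : ℕ → ℝ → ℝ) (k d : ℕ) (I : Fin k → ℕ) (t : ℝ) (a b : Fin k) (hab : a ≠ b)
    (h : I a = I b) : DD w k d I t = 0 := by
  apply Matrix.det_zero_of_row_eq hab
  funext c; simp [h]

lemma DD_big (w : ℕ → ℝ → ℝ) (k d : ℕ) (I : Fin k → ℕ) (t : ℝ) (a : Fin k)
    (h : d + k ≤ I a) : DD w k d I t = 0 := by
  apply Matrix.det_eq_zero_of_row_eq_zero a
  intro c; simp only [Matrix.of_apply]; exact aa_gt _ _ _ _ (by have := c.2; omega)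

lemma DD_top (w : ℕ → ℝ → ℝ) (k d : ℕ) (t : ℝ) : DD w k d (fun r => d + r) t = 1 := by
  unfold DD
  rw [Matrix.det_of_isUpperTriangular]
  · simp [aa_self]
  · intro i j hij
    simp only [Matrix.of_apply]; exact aa_gt _ _ _ _ (by simpa using hij)

lemma DD_zero (w : ℕ → ℝ → ℝ) (k d : ℕ) (I : Fin k → ℕ) (a : Fin k) (h : I a < d) :
    DD w k d I 0 = 0 := by
  apply Matrix.det_eq_zero_of_row_eq_zero a
  intro c; simp only [Matrix.of_apply]; exact aa_zero _ _ _ (by omega)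

/-- cells of the diagram associated with end positions `I` -/
def cells (k d : ℕ) (I : Fin k → ℕ) : Finset (Fin k × Fin d) :=
  Finset.univ.filter fun c => (c.2 : ℕ) + I c.1 < d + c.1

def WW (w : ℕ → ℝ → ℝ) (k d : ℕ) (c : Fin k × Fin d) : ℝ → ℝ := w (d + c.1 - c.2 - 1)

lemma main_ind (w : ℕ → ℝ → ℝ) (hw : ∀ h, Continuous (w h)) (hp : ∀ h s, 0 ≤ w h s) (k d : ℕ)
    (N : ℕ) : ∀ (I : Fin k → ℕ), StrictMono I → (∀ r : Fin k, (r : ℕ) ≤ I r) →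
      (∀ r : Fin k, I r ≤ d + r) →
      (∑ r, I r) + N = ∑ r : Fin k, (d + (r : ℕ)) → ∀ t, 0 < t →
      0 ≤ DD w k d I t ∧ FF (WW w k d) (cells k d I) t = ENNReal.ofReal (DD w k d I t) := by
  induction N with
  | zero =>
    intro I hI h1 h2 hN t ht
    have hIJ : I = fun r : Fin k => d + (r : ℕ) := by
      funext r
      exact (Finset.sum_eq_sum_iff_of_le (fun r _ => h2 r)).1 hN r (Finset.mem_univ r)
    subst hIJ
    have : cells k d (fun r => d + (r : ℕ)) = ∅ := by
      ext c; simp [cells]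
    rw [DD_top, this, FF_empty]
    simp
  | succ N ih =>
    intro I hI h1 h2 hN t ht
    -- the first position is not yet at the top
    have hex : ∃ r : Fin k, I r < d + r := by
      by_contra hcon
      push Not at hcon
      have : ∑ r, I r = ∑ r : Fin k, (d + (r : ℕ)) :=
        Finset.sum_congr rfl fun r _ => le_antisymm (h2 r) (hcon r)
      omega
    obtain ⟨r0, hr0⟩ := hex
    have hgap : ∀ (n : ℕ) (a b : Fin k), (b : ℕ) = a + n → I a + n ≤ I b := by
      intro n
      induction n with
      | zero =>
        intro a b hab
        have : a = b := Fin.ext (by omega)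
        subst this; simp
      | succ n ihn =>
        intro a b hab
        have hlt : (a : ℕ) + n < k := by have := b.2; omega
        have := ihn a ⟨a + n, hlt⟩ rfl
        have h3 : I ⟨a + n, hlt⟩ < I b := hI (by rw [Fin.lt_def]; simp; omega)
        omega
    have hk : 0 < k := by have := r0.2; omega
    have hz : DD w k d I 0 = 0 := by
      refine DD_zero w k d I ⟨0, hk⟩ ?_
      have := hgap r0 ⟨0, hk⟩ r0 (by simp)
      omega
    have hcont : Continuous fun s => ∑ r, w (I r) s * DD w k d (Function.update I r (I r + 1)) s :=
      continuous_finsetSum _ fun r _ => (hw _).mul (DD_cont w hw _ _ _)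
    have hint : ∀ t, DD w k d I t =
        ∫ s in (0 : ℝ)..t, ∑ r, w (I r) s * DD w k d (Function.update I r (I r + 1)) s := by
      intro t
      rw [intervalIntegral.integral_eq_sub_of_hasDerivAt (fun s _ => DD_deriv w hw k d I s)
        (hcont.intervalIntegrable _ _), hz, sub_zero]
    -- good moves
    let good : Fin k → Prop := fun r => I r < d + r ∧ ∀ b : Fin k, (b : ℕ) = r + 1 → I r + 1 < I b
    have hbad : ∀ r, ¬ good r → ∀ s, DD w k d (Function.update I r (I r + 1)) s = 0 := by
      intro r hr s
      by_cases hb : ∀ b : Fin k, (b : ℕ) = r + 1 → I r + 1 < I b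
      · have hr2 : I r = d + r := le_antisymm (h2 r) (by
          by_contra hc; exact hr ⟨by omega, hb⟩)
        by_cases hlast : (r : ℕ) + 1 < k
        · have := hb ⟨r + 1, hlast⟩ rfl
          have h3 := h2 ⟨r + 1, hlast⟩
          simp only at h3
          omega
        · refine DD_big w k d _ s r ?_
          simp only [Function.update_self]
          have := r.2
          omega
      · push Not at hb
        obtain ⟨b, hb1, hb2⟩ := hb
        have hne : b ≠ r := fun h => by rw [h] at hb1; omega
        refine DD_noninj w k d _ s r b hne.symm ?_
        rw [Function.update_self, Function.update_of_ne hne]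
        have : I r < I b := hI (by rw [Fin.lt_def]; omega)
        omega
    have hgood : ∀ r, good r → ∀ s, 0 < s →
        0 ≤ DD w k d (Function.update I r (I r + 1)) s ∧
        FF (WW w k d) (cells k d (Function.update I r (I r + 1))) s =
          ENNReal.ofReal (DD w k d (Function.update I r (I r + 1)) s) := by
      intro r hr s hs
      refine ih _ ?_ ?_ ?_ ?_ s hs
      · intro a b hab
        have h0 := hI hab
        by_cases har : a = r
        · subst har
          rw [Function.update_self, Function.update_of_ne hab.ne']
          have hab' : (a : ℕ) < b := hab
          have hlt : (a : ℕ) + 1 < k := by have := b.2; omega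
          have h4 := hr.2 ⟨a + 1, hlt⟩ rfl
          have h5 : I ⟨a + 1, hlt⟩ ≤ I b := hI.monotone (by rw [Fin.le_def]; simp; omega)
          omega
        · rw [Function.update_of_ne har]
          by_cases hbr : b = r
          · subst hbr; rw [Function.update_self]; omega
          · rw [Function.update_of_ne hbr]; exact h0
      · intro a
        by_cases har : a = r
        · subst har; rw [Function.update_self]; have := h1 a; omega
        · rw [Function.update_of_ne har]; exact h1 a
      · intro a
        by_cases har : a = r
        · subst har; rw [Function.update_self]; exact hr.1
        · rw [Function.update_of_ne har]; exact h2 a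
      · rw [Finset.sum_update_of_mem (Finset.mem_univ r)]
        rw [← Finset.add_sum_erase _ _ (Finset.mem_univ r)] at hN
        rw [← Finset.erase_eq] 
        omega
    have hnn : ∀ r, ∀ s, 0 < s → 0 ≤ w (I r) s * DD w k d (Function.update I r (I r + 1)) s := by
      intro r s hs
      by_cases hr : good r
      · exact mul_nonneg (hp _ _) (hgood r hr s hs).1
      · rw [hbad r hr, mul_zero]
    have hDint : DD w k d I t = ∫ s in Set.Ioo (0 : ℝ) t, ∑ r, w (I r) s *
        DD w k d (Function.update I r (I r + 1)) s := by
      rw [hint t, intervalIntegral.integral_of_le ht.le, integral_Ioc_eq_integral_Ioo]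
    have hpos : 0 ≤ DD w k d I t := by
      rw [hDint]
      exact setIntegral_nonneg measurableSet_Ioo fun s hs =>
        Finset.sum_nonneg fun r _ => hnn r s hs.1
    refine ⟨hpos, ?_⟩
    classical
    have hR : ENNReal.ofReal (DD w k d I t) = ∑ r ∈ Finset.univ.filter good,
        ∫⁻ s in Set.Ioo (0 : ℝ) t, ENNReal.ofReal (w (I r) s) *
          FF (WW w k d) (cells k d (Function.update I r (I r + 1))) s := by
      rw [hDint, ofReal_integral_eq_lintegral_ofReal]
      · rw [Finset.sum_filter]
        have : ∀ r, (if good r then ∫⁻ s in Set.Ioo (0 : ℝ) t, ENNReal.ofReal (w (I r) s) *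
          FF (WW w k d) (cells k d (Function.update I r (I r + 1))) s else 0) =
            ∫⁻ s in Set.Ioo (0 : ℝ) t, ENNReal.ofReal (w (I r) s *
              DD w k d (Function.update I r (I r + 1)) s) := by
          intro r
          by_cases hr : good r
          · rw [if_pos hr]
            refine setLIntegral_congr_fun measurableSet_Ioo fun s hs => ?_
            rw [(hgood r hr s hs.1).2, ENNReal.ofReal_mul (hp _ _)]
          · simp [hbad r hr, hr]
        rw [Finset.sum_congr rfl fun r _ => this r]
        rw [← lintegral_finsetSum]
        · refine setLIntegral_congr_fun measurableSet_Ioo fun s hs => ?_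
          exact ENNReal.ofReal_sum_of_nonneg fun r _ => hnn r s hs.1
        · intro r _
          exact ((hw _).mul (DD_cont w hw _ _ _)).measurable.ennreal_ofReal
      · exact (hcont.integrableOn_Icc).mono_set Set.Ioo_subset_Icc_self
      · refine (ae_restrict_iff' measurableSet_Ioo).2 (Filter.Eventually.of_forall fun s hs => ?_)
        exact Finset.sum_nonneg fun r _ => hnn r s hs.1
    have hlt : ∀ r : Fin k, I r < d + r → d + r - I r - 1 < d := fun r h => by
      have := h1 r; omega
    have hne : (cells k d I).Nonempty :=
      ⟨(r0, ⟨d + r0 - I r0 - 1, hlt r0 hr0⟩), by simp [cells]; omega⟩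
    rw [hR, FF_rec (WW w k d) (fun c => hw _) _ hne]
    symm
    refine Finset.sum_bij (fun r hr => (r, (⟨d + r - I r - 1,
      hlt r (Finset.mem_filter.1 hr).2.1⟩ : Fin d))) ?_ ?_ ?_ ?_
    · intro r hr
      obtain ⟨hr1, hr2⟩ := (Finset.mem_filter.1 hr).2
      simp only [Finset.mem_filter, cells, Finset.mem_univ, true_and]
      refine ⟨by omega, ?_⟩
      rintro ⟨a, l⟩ hal hlt'
      simp only at hal
      rw [Prod.lt_iff] at hlt'
      simp only [Fin.lt_def, Fin.le_def] at hlt'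
      have har : (r : ℕ) ≤ a := by omega
      have := hgap (a - r) r a (by omega)
      by_cases hra : (r : ℕ) = a
      · have : r = a := Fin.ext hra
        subst this
        omega
      · have hlt2 : (r : ℕ) + 1 < k := by have := a.2; omega
        have h4 := hr2 ⟨r + 1, hlt2⟩ rfl
        have h5 := hgap (a - r - 1) ⟨r + 1, hlt2⟩ a (by simp; omega)
        omega
    · intro r _ r' _ h
      exact (Prod.mk.inj h).1
    · rintro ⟨a, l⟩ hal
      simp only [Finset.mem_filter, cells, Finset.mem_univ, true_and] at hal
      obtain ⟨hal1, hal2⟩ := hal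
      have hl : (l : ℕ) = d + a - I a - 1 := by
        by_contra hcon
        have hl2 : (l : ℕ) + 1 < d := by have := h1 a; omega
        refine hal2 (a, ⟨l + 1, hl2⟩) (by simp; omega) ?_
        rw [Prod.lt_iff]
        right
        exact ⟨le_rfl, by rw [Fin.lt_def]; simp⟩
      refine ⟨a, ?_, ?_⟩
      · simp only [Finset.mem_filter, Finset.mem_univ, true_and]
        refine ⟨by omega, fun b hb => ?_⟩
        have hab : a < b := by rw [Fin.lt_def]; omega
        have h6 := hI hab
        by_contra hcon
        refine hal2 (b, l) (by simp only; omega) ?_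
        rw [Prod.lt_iff]
        left
        exact ⟨hab, le_rfl⟩
      · exact Prod.ext rfl (Fin.ext hl.symm)
    · intro r hr
      obtain ⟨hr1, hr2⟩ := (Finset.mem_filter.1 hr).2
      have e1 : (cells k d I).erase (r, ⟨d + r - I r - 1, hlt r hr1⟩) =
          cells k d (Function.update I r (I r + 1)) := by
        ext ⟨a, l⟩
        simp only [Finset.mem_erase, cells, Finset.mem_filter, Finset.mem_univ, true_and, ne_eq,
          Prod.mk.injEq, Fin.ext_iff, Function.update_apply]
        by_cases har : a = r
        · subst har; simp; omega
        · have : (a : ℕ) ≠ r := fun h => har (Fin.ext h)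
          simp [this]
      have e2 : WW w k d (r, ⟨d + r - I r - 1, hlt r hr1⟩) = w (I r) := by
        unfold WW
        congr 1
        simp only
        omega
      rw [e1, e2]

lemma main_FF (w : ℕ → ℝ → ℝ) (hw : ∀ h, Continuous (w h)) (hp : ∀ h s, 0 ≤ w h s) (k d : ℕ)
    (t : ℝ) (ht : 0 < t) :
    0 ≤ DD w k d (fun r => r) t ∧
    ∫⁻ u, ff (WW w k d) Finset.univ t u = ENNReal.ofReal (DD w k d (fun r => r) t) := by
  have := main_ind w hw hp k d (∑ r : Fin k, d) (fun r => r) (fun a b h => h) (fun r => le_rfl)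
    (fun r => by omega) (by rw [← Finset.sum_add_distrib]; simp only [add_comm]) t ht
  have e : cells k d (fun r => r) = Finset.univ := by
    ext c; have := c.2.2; simp [cells]
  rw [e, FF_univ] at this
  exact this

end KM

namespace KM

/-- interlacing description of the non-intersection set -/
def nn (k d : ℕ) (t : ℝ) : Set (Fin k → Fin d → ℝ) :=
  {φ | (∀ r, φ r ∈ chainSet d t) ∧ ∀ r r' : Fin k, r < r' → ∀ l, φ r l ≤ φ r' l}

lemma card_le_iff {d : ℕ} (u : Fin d → ℝ) (hu : StrictMono u) (s : ℝ) (l : Fin d) :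
    (l : ℕ) + 1 ≤ (Finset.univ.filter (fun l : Fin d => u l ≤ s)).card ↔ u l ≤ s := by
  constructor
  · intro h
    by_contra hcon
    have hsub : Finset.univ.filter (fun l : Fin d => u l ≤ s) ⊆ Finset.Iio l := by
      intro a ha
      rw [Finset.mem_filter] at ha
      rw [Finset.mem_Iio]
      by_contra hla
      exact hcon ((hu.monotone (not_lt.1 hla)).trans ha.2)
    have := Finset.card_le_card hsub
    rw [Fin.card_Iio] at this
    omega
  · intro h
    have hsub : Finset.Iic l ⊆ Finset.univ.filter (fun l : Fin d => u l ≤ s) := by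
      intro a ha
      rw [Finset.mem_Iic] at ha
      simp only [Finset.mem_filter, Finset.mem_univ, true_and]
      exact (hu.monotone ha).trans h
    have := Finset.card_le_card hsub
    rwa [Fin.card_Iic] at this

lemma nonint_eq (m k : ℕ) (t : ℝ) : nonint m k t = nn k (m - k) t := by
  ext φ
  simp only [nonint, nn, Set.mem_ofPred_eq]
  refine and_congr_right fun hch => ?_
  constructor
  · intro h
    have hadj : ∀ r r' : Fin k, (r' : ℕ) = r + 1 → ∀ l, φ r l ≤ φ r' l := by
      intro r r' hrr l
      have h1 := (hch r').2 l
      have h2 := h (φ r' l) ⟨h1.1.le, h1.2.le⟩ r r' (by rw [Fin.lt_def]; omega)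
      rw [← card_le_iff (φ r) (hch r).1]
      have h3 := (card_le_iff (φ r') (hch r').1 (φ r' l) l).2 le_rfl
      unfold pathStep at h2
      omega
    have : ∀ (n : ℕ) (r r' : Fin k), (r' : ℕ) = r + n → ∀ l, φ r l ≤ φ r' l := by
      intro n
      induction n with
      | zero =>
        intro r r' hrr l
        have : r' = r := Fin.ext hrr
        rw [this]
      | succ n ih =>
        intro r r' hrr l
        have hlt : (r : ℕ) + n < k := by have := r'.2; omega
        exact (ih r ⟨r + n, hlt⟩ rfl l).trans (hadj ⟨r + n, hlt⟩ r' (by simp; omega) l)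
    intro r r' hrr
    exact this (r' - r) r r' (by rw [Fin.lt_def] at hrr; omega)
  · intro h s _ r r' hrr
    have hsub : Finset.univ.filter (fun l => φ r' l ≤ s) ⊆ Finset.univ.filter (fun l => φ r l ≤ s) := by
      intro a ha
      simp only [Finset.mem_filter, Finset.mem_univ, true_and] at ha ⊢
      exact (h r r' hrr a).trans ha
    have h1 := Finset.card_le_card hsub
    have h2 := Finset.card_filter_le (Finset.univ : Finset (Fin (m - k))) (fun l => φ r l ≤ s)
    rw [Finset.card_univ, Fintype.card_fin] at h2
    rw [Fin.lt_def] at hrr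
    unfold pathStep
    omega

lemma nn_meas (k d : ℕ) (t : ℝ) : MeasurableSet (nn k d t) := by
  have hm : ∀ r l, Measurable fun φ : Fin k → Fin d → ℝ => φ r l := fun r l =>
    (measurable_pi_apply l).comp (measurable_pi_apply r)
  simp only [nn, chainSet, Set.mem_ofPred_eq, StrictMono, Set.mem_Ioo]
  rw [measurableSet_setOfPred]
  refine Measurable.and ?_ ?_
  · refine Measurable.forall fun r => Measurable.and ?_ ?_
    · refine Measurable.forall fun a => Measurable.forall fun b =>
        Measurable.imp measurable_const ?_
      exact measurableSet_setOfPred.1 (measurableSet_lt (hm r a) (hm r b))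
    · refine Measurable.forall fun a => Measurable.and ?_ ?_
      · exact measurableSet_setOfPred.1 (measurableSet_lt measurable_const (hm r a))
      · exact measurableSet_setOfPred.1 (measurableSet_lt (hm r a) measurable_const)
  · refine Measurable.forall fun a => Measurable.forall fun b =>
        Measurable.imp measurable_const (Measurable.forall fun l => ?_)
    exact measurableSet_setOfPred.1 (measurableSet_le (hm a l) (hm b l))

lemma ae_inj {α : Type*} [Fintype α] [DecidableEq α] :
    ∀ᵐ u : α → ℝ, ∀ c c' : α, c ≠ c' → u c ≠ u c' := by
  rw [ae_all_iff]; intro c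
  rw [ae_all_iff]; intro c'
  by_cases h : c = c'
  · simp [h]
  · have h0 : (volume : Measure (α → ℝ)) (LinearMap.ker (LinearMap.proj (R := ℝ) (φ := fun _ : α => ℝ) c -
        LinearMap.proj (R := ℝ) (φ := fun _ : α => ℝ) c') : Set (α → ℝ)) = 0 := by
      apply Measure.addHaar_submodule
      intro htop
      have : (Pi.single c 1 : α → ℝ) ∈ LinearMap.ker (LinearMap.proj (R := ℝ) (φ := fun _ : α => ℝ) c -
        LinearMap.proj (R := ℝ) (φ := fun _ : α => ℝ) c') := by rw [htop]; trivial
      simp [LinearMap.mem_ker, Ne.symm h] at this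
    rw [ae_iff]
    refine measure_mono_null ?_ h0
    intro u hu
    simp only [Set.mem_ofPred_eq] at hu
    push Not at hu
    simp [LinearMap.mem_ker, hu.2]

lemma mp_uncurry (k d : ℕ) : MeasurePreserving (MeasurableEquiv.curry (Fin k) (Fin d) ℝ).symm
    (volume : Measure (Fin k → Fin d → ℝ)) (volume : Measure (Fin k × Fin d → ℝ)) := by
  refine ⟨MeasurableEquiv.measurable _, ?_⟩
  symm
  refine Measure.pi_eq fun s hs => ?_
  rw [MeasurableEquiv.map_apply]
  have : (MeasurableEquiv.curry (Fin k) (Fin d) ℝ).symm ⁻¹' (Set.univ.pi s) =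
      Set.univ.pi fun r => Set.univ.pi fun l => s (r, l) := by
    ext φ
    simp only [Set.mem_preimage, Set.mem_pi, Set.mem_univ, true_implies, Prod.forall]
    rfl
  rw [this, volume_pi_pi]
  simp only [volume_pi_pi]
  rw [← Finset.univ_product_univ, Finset.prod_product]

lemma nn_integral (w : ℕ → ℝ → ℝ) (hw : ∀ h, Continuous (w h)) (hp : ∀ h s, 0 ≤ w h s) (k d : ℕ)
    (t : ℝ) (ht : 0 < t) :
    ∫ φ in nn k d t, ∏ r : Fin k, ∏ l : Fin d, w (d + r - l - 1) (φ r l) =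
      DD w k d (fun r => r) t := by
  obtain ⟨hpos, hFF⟩ := main_FF w hw hp k d t ht
  have hgc : Continuous fun φ : Fin k → Fin d → ℝ =>
      ∏ r : Fin k, ∏ l : Fin d, w (d + r - l - 1) (φ r l) :=
    continuous_finsetProd _ fun r _ => continuous_finsetProd _ fun l _ =>
      (hw _).comp (by fun_prop)
  rw [integral_eq_lintegral_of_nonneg_ae (Filter.Eventually.of_forall fun φ =>
    Finset.prod_nonneg fun r _ => Finset.prod_nonneg fun l _ => hp _ _)
    hgc.aestronglyMeasurable]
  rw [← ENNReal.toReal_ofReal hpos, ← hFF]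
  congr 1
  rw [← lintegral_indicator (nn_meas k d t), ← (mp_uncurry k d).map_eq, lintegral_map_equiv]
  have hae := (mp_uncurry k d).quasiMeasurePreserving.ae ae_inj
  refine lintegral_congr_ae ?_
  filter_upwards [hae] with φ hφ
  set u := (MeasurableEquiv.curry (Fin k) (Fin d) ℝ).symm φ with hu
  have huv : ∀ r l, u (r, l) = φ r l := fun r l => rfl
  have hiff : φ ∈ nn k d t ↔ u ∈ std Finset.univ t := by
    simp only [nn, std, chainSet, Set.mem_ofPred_eq, Finset.mem_univ, true_implies, Prod.forall,
      huv, Set.mem_Ioo]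
    constructor
    · rintro ⟨h1, h2⟩
      refine ⟨fun r l => (h1 r).2 l, fun r l r' l' h => hφ _ _ h, fun r l r' l' h => ?_⟩
      have hne := hφ _ _ h.ne
      have hle := h.le
      rw [Prod.le_def] at hle
      simp only [huv] at hne hle
      refine lt_of_le_of_ne ?_ hne
      refine ((h1 r).1.monotone hle.2).trans ?_
      rcases hle.1.eq_or_lt with h | h
      · rw [h]
      · exact h2 r r' h l'
    · rintro ⟨h1, h2, h3⟩
      refine ⟨fun r => ⟨fun a b hab => h3 _ _ _ _ ?_, h1 r⟩, fun r r' h l => (h3 _ _ _ _ ?_).le⟩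
      · exact Prod.lt_iff.2 (Or.inr ⟨le_rfl, hab⟩)
      · exact Prod.lt_iff.2 (Or.inl ⟨h, le_rfl⟩)
  unfold ff
  by_cases h : φ ∈ nn k d t
  · rw [Set.indicator_of_mem h, if_pos (hiff.1 h), ← Finset.univ_product_univ, Finset.prod_product,
      ENNReal.ofReal_prod_of_nonneg fun r _ => Finset.prod_nonneg fun l _ => hp _ _]
    refine Finset.prod_congr rfl fun r _ => ?_
    rw [ENNReal.ofReal_prod_of_nonneg fun l _ => hp _ _]
    rfl
  · rw [Set.indicator_of_notMem h, if_neg fun h' => h (hiff.2 h')]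

lemma chain_integral (w : ℕ → ℝ → ℝ) (hw : ∀ h, Continuous (w h)) (hp : ∀ h s, 0 ≤ w h s)
    (i d : ℕ) (t : ℝ) (ht : 0 < t) :
    ∫ u in chainSet d t, ∏ l : Fin d, w (i + d - l - 1) (u l) = aa w i (i + d) t := by
  have h := nn_integral (fun h => w (h + i)) (fun h => hw _) (fun h s => hp _ _) 1 d t ht
  have e1 : DD (fun h => w (h + i)) 1 d (fun r => (r : ℕ)) t = aa w i (i + d) t := by
    simp [DD, aa, AA_shift]
  rw [← e1, ← h]
  have hmp := volume_preserving_funUnique (Fin 1) (Fin d → ℝ)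
  rw [← hmp.setIntegral_preimage_emb (MeasurableEquiv.measurableEmbedding _)]
  have e2 : (MeasurableEquiv.funUnique (Fin 1) (Fin d → ℝ)) ⁻¹' chainSet d t = nn 1 d t := by
    ext φ
    simp only [Set.mem_preimage, nn, Set.mem_ofPred_eq, MeasurableEquiv.funUnique_apply]
    constructor
    · intro h
      refine ⟨fun r => ?_, fun r r' hrr => absurd hrr (by rw [Subsingleton.elim r r']; exact lt_irrefl _)⟩
      rw [Subsingleton.elim r default]; exact h
    · exact fun h => h.1 _
  rw [e2]
  congr 1
  funext φ
  simp only [Finset.univ_unique, Finset.prod_singleton, MeasurableEquiv.funUnique_apply]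
  refine Finset.prod_congr rfl fun l _ => ?_
  have := l.2
  simp
  congr 1
  omega

end KM

namespace KM

lemma pathE_eq (η : ℝ → ℕ → ℝ) (i d : ℕ) (t : ℝ) (u : ℕ → ℝ) :
    pathE η i (i + d) t u = η t i +
      ∑ l ∈ Finset.range d, (η (u l) (i + d - l) - η (u l) (i + d - l - 1)) := by
  unfold pathE
  simp only [Nat.add_sub_cancel_left]
  set v : ℕ → ℝ := fun l => if l < d then u l else t with hv
  rw [← Finset.sum_range_reflect]
  have e1 : ∀ l ∈ Finset.range d, η (v (d - (d - 1 - l))) (i + (d - 1 - l)) -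
      η (v (d - 1 - (d - 1 - l))) (i + (d - 1 - l)) =
      (η (v (l + 1)) (i + d - (l + 1)) - η (v l) (i + d - l)) +
        (η (u l) (i + d - l) - η (u l) (i + d - l - 1)) := by
    intro l hl
    rw [Finset.mem_range] at hl
    have a1 : d - (d - 1 - l) = l + 1 := by omega
    have a2 : d - 1 - (d - 1 - l) = l := by omega
    have a3 : i + (d - 1 - l) = i + d - (l + 1) := by omega
    have a4 : i + d - l - 1 = i + d - (l + 1) := by omega
    have a5 : v l = u l := by simp [hv, hl]
    rw [a1, a2, a3, a4, a5]; ring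
  rw [Finset.sum_congr rfl e1, Finset.sum_add_distrib,
    Finset.sum_range_sub (fun l => η (v l) (i + d - l))]
  have a6 : v d = t := by simp [hv]
  simp only [a6, Nat.add_sub_cancel, Nat.sub_zero]
  ring

/-- weights -/
noncomputable def wt (n : ℕ) (η : ℝ → ℕ → ℝ) (h : ℕ) (s : ℝ) : ℝ :=
  if h + 2 ≤ n then Real.exp (η (max s 0) (h + 2) - η (max s 0) (h + 1)) else 0

lemma wt_cont (n : ℕ) (η : ℝ → ℕ → ℝ)
    (hη : ∀ i, 1 ≤ i → i ≤ n → ContinuousOn (fun s => η s i) (Set.Ici 0)) (h : ℕ) :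
    Continuous (wt n η h) := by
  unfold wt
  by_cases hh : h + 2 ≤ n
  · simp only [hh, if_true]
    have hc : ∀ i, 1 ≤ i → i ≤ n → Continuous fun s => η (max s 0) i := fun i h1 h2 =>
      (hη i h1 h2).comp_continuous (f := fun s : ℝ => max s 0) (by fun_prop) fun s =>
        Set.mem_Ici.2 (le_max_right _ _)
    exact Real.continuous_exp.comp ((hc _ (by omega) hh).sub (hc _ (by omega) (by omega)))
  · simp only [hh, if_false]; exact continuous_const

lemma wt_nonneg (n : ℕ) (η : ℝ → ℕ → ℝ) (h : ℕ) (s : ℝ) : 0 ≤ wt n η h s := by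
  unfold wt; split_ifs <;> positivity

lemma exp_pathE (n : ℕ) (η : ℝ → ℕ → ℝ) (p d : ℕ) (hpd : p + d < n) (t : ℝ) (u : Fin d → ℝ)
    (hu : u ∈ chainSet d t) :
    Real.exp (pathE η (p + 1) (p + d + 1) t (fun l => if h : l < d then u ⟨l, h⟩ else 0)) =
      Real.exp (η t (p + 1)) * ∏ l : Fin d, wt n η (p + d - l - 1) (u l) := by
  have : p + d + 1 = p + 1 + d := by omega
  rw [this, pathE_eq, Real.exp_add, Real.exp_sum, Finset.prod_range]
  congr 1
  refine Finset.prod_congr rfl fun l _ => ?_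
  have hl := l.2
  have h0 : max (u l) 0 = u l := max_eq_left (hu.2 l).1.le
  have a1 : p + d - l - 1 + 2 = p + 1 + d - l := by omega
  have a2 : p + d - l - 1 + 1 = p + 1 + d - l - 1 := by omega
  unfold wt
  rw [if_pos (by omega), h0, a1, a2]
  simp [hl]

lemma grsk_eq (n : ℕ) (η : ℝ → ℕ → ℝ)
    (hη : ∀ i, 1 ≤ i → i ≤ n → ContinuousOn (fun s => η s i) (Set.Ici 0))
    (t : ℝ) (ht : 0 < t) (i j : Fin n) :
    grsk n η t i j = Real.exp (η t ((i : ℕ) + 1)) * aa (wt n η) i j t := by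
  simp only [grsk, Matrix.of_apply]
  split_ifs with h1 h2
  · rw [h1, aa_self, mul_one]
  · obtain ⟨d, hd⟩ : ∃ d, (j : ℕ) = i + d := ⟨j - i, by omega⟩
    have hj := j.2
    rw [hd] at hj ⊢
    rw [← chain_integral (wt n η) (wt_cont n η hη) (wt_nonneg n η) i d t ht]
    rw [← integral_const_mul]
    have e : (i : ℕ) + d - i = d := by omega
    have hm : MeasurableSet (chainSet d t) := by
      simp only [chainSet, StrictMono, Set.mem_Ioo]
      rw [measurableSet_setOfPred]
      refine Measurable.and ?_ ?_
      · refine Measurable.forall fun a => Measurable.forall fun b =>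
          Measurable.imp measurable_const ?_
        exact measurableSet_setOfPred.1
          (measurableSet_lt (measurable_pi_apply a) (measurable_pi_apply b))
      · refine Measurable.forall fun a => Measurable.and ?_ ?_
        · exact measurableSet_setOfPred.1 (measurableSet_lt measurable_const (measurable_pi_apply a))
        · exact measurableSet_setOfPred.1 (measurableSet_lt (measurable_pi_apply a) measurable_const)
    generalize hD : (i : ℕ) + d - i = D
    rw [e] at hD
    subst hD
    exact setIntegral_congr_fun hm fun u hu => exp_pathE n η i d hj t u hu
  · rw [aa_gt _ _ _ _ (by omega), mul_zero]

end KM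

theorem stmt2 (n : ℕ) (η : ℝ → ℕ → ℝ)
    (hη : ∀ i, 1 ≤ i → i ≤ n → ContinuousOn (fun s => η s i) (Set.Ici 0))
    (hη0 : ∀ i, η 0 i = 0)
    (k m : ℕ) (hk : 1 ≤ k) (hkm : k ≤ m) (hm : m ≤ n) (t : ℝ) (ht : 0 < t) :
    Delta (grsk n η t) k m =
      ∫ φ in nonint m k t,
        Real.exp (∑ r : Fin k, pathE η ((r : ℕ) + 1) (m - k + (r : ℕ) + 1) t
          (fun l => if h : l < m - k then φ r ⟨l, h⟩ else 0)) := by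
  have hL : Delta (grsk n η t) k m = (∏ r : Fin k, Real.exp (η t ((r : ℕ) + 1))) *
      KM.DD (KM.wt n η) k (m - k) (fun r => r) t := by
    unfold Delta KM.DD
    rw [← Matrix.det_mul_column]
    congr 1
    ext i j
    have hi := i.2
    have hj := j.2
    simp only [Matrix.of_apply]
    rw [dif_pos ⟨by omega, by omega⟩, KM.grsk_eq n η hη t ht]
  rw [hL, KM.nonint_eq, ← KM.nn_integral (KM.wt n η) (KM.wt_cont n η hη) (KM.wt_nonneg n η) k (m - k)
    t ht, ← integral_const_mul]
  refine setIntegral_congr_fun (KM.nn_meas _ _ _) fun φ hφ => ?_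
  rw [Real.exp_sum, ← Finset.prod_mul_distrib]
  refine Finset.prod_congr rfl fun r _ => ?_
  have hr := r.2
  have := KM.exp_pathE n η r (m - k) (by omega) t (φ r) (hφ.1 r)
  rw [add_comm (m - k) (r : ℕ)]
  exact this.symm
end

section
/- Let η : [0,∞) → ℝ^n be smooth and let x^m_i : [0,∞) → ℝ (1 ≤ i ≤ m ≤ n) be differentiable functions satisfying the system (dyn-rsk) driven by η. For 1 ≤ m ≤ n define w^m(t) ∈ ℝ^{n−m+1} by w^m_1(t) = e^{x^m_1(t)} and w^m_i(t) = e^{x^{m+i−1}_i(t) − x^{m+i−2}_{i−1}(t)} for 1 < i ≤ n−m+1, and set b(t) = E_1(w^1(t)) E_2(w^2(t)) ⋯ E_n(w^n(t)). Then b is differentiable and b'(t) = ε_{η'(t)} · b(t) for all t ≥ 0. -/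
/-- `ε_λ`: the matrix with diagonal `λ`, `1`s on the superdiagonal, `0` elsewhere. -/
def eps {n : ℕ} (lam : Fin n → ℝ) : Matrix (Fin n) (Fin n) ℝ :=
  Matrix.of fun i j : Fin n =>
    if (j : ℕ) = (i : ℕ) then lam i else if (j : ℕ) = (i : ℕ) + 1 then 1 else 0

/-- The Gelfand–Tsetlin parameters (1-based): `w^m_1 = e^{x^m_1}` and
`w^m_i = e^{x^{m+i-1}_i − x^{m+i-2}_{i-1}}` for `i > 1`. -/
noncomputable def wfun (x : ℕ → ℕ → ℝ → ℝ) (m i : ℕ) (t : ℝ) : ℝ :=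
  if i = 1 then Real.exp (x m 1 t)
  else Real.exp (x (m + i - 1) i t - x (m + i - 2) (i - 1) t)

/-- `b(t) = E_1(w^1(t)) ⋯ E_n(w^n(t))`. -/
noncomputable def bMat (n : ℕ) (x : ℕ → ℕ → ℝ → ℝ) (t : ℝ) : Matrix (Fin n) (Fin n) ℝ :=
  ((List.finRange n).map (fun p : Fin n =>
    Emat (n := n) (p : ℕ) (fun l => wfun x ((p : ℕ) + 1) (l + 1) t))).prod
/-- Upper bidiagonal matrix. -/
def bid (n : ℕ) (d u : ℕ → ℝ) : Matrix (Fin n) (Fin n) ℝ :=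
  Matrix.of fun i j : Fin n =>
    if (j : ℕ) = (i : ℕ) then d i else if (j : ℕ) = (i : ℕ) + 1 then u i else 0

theorem bid_mul_apply (n : ℕ) (d u : ℕ → ℝ) (B : Matrix (Fin n) (Fin n) ℝ) (i j : Fin n) :
    (bid n d u * B) i j = d i * B i j +
      (if h : (i : ℕ) + 1 < n then u i * B ⟨(i : ℕ) + 1, h⟩ j else 0) := by
  rw [Matrix.mul_apply]
  have key : ∀ k : Fin n, bid n d u i k * B k j =
      (if k = i then d i * B i j else 0) +
      (if (k : ℕ) = (i : ℕ) + 1 then u i * B k j else 0) := by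
    intro k
    by_cases h1 : k = i
    · subst h1
      simp [bid]
    · have h1' : (k : ℕ) ≠ i := fun h => h1 (Fin.ext h)
      by_cases h2 : (k : ℕ) = (i : ℕ) + 1
      · simp [bid, h1, h2]
      · simp [bid, h1, h1', h2]
  rw [Finset.sum_congr rfl (fun k _ => key k), Finset.sum_add_distrib]
  congr 1
  · simp
  · split_ifs with h
    · rw [Finset.sum_eq_single (⟨(i : ℕ) + 1, h⟩ : Fin n)]
      · simp
      · intro b _ hb
        rw [if_neg]
        intro h'
        exact hb (Fin.ext h')
      · simp
    · apply Finset.sum_eq_zero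
      intro k _
      rw [if_neg]
      have := k.2
      omega

theorem bid_mul_bid (n : ℕ) (d u d' u' : ℕ → ℝ) (i j : Fin n) :
    (bid n d u * bid n d' u') i j =
      if (j : ℕ) = i then d i * d' i
      else if (j : ℕ) = i + 1 then d i * u' i + u i * d' (i + 1)
      else if (j : ℕ) = i + 2 then u i * u' (i + 1) else 0 := by
  rw [bid_mul_apply]
  have hj := j.2
  by_cases h0 : (j : ℕ) = i
  · simp [bid, h0]
    intro _ h
    omega
  · by_cases h1 : (j : ℕ) = i + 1
    · have : (i : ℕ) + 1 < n := by omega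
      simp [bid, h1, this]
    · by_cases h2 : (j : ℕ) = i + 2
      · have : (i : ℕ) + 1 < n := by omega
        simp [bid, h2, this]
      · simp [bid, h0, h1, h2]

theorem prod_deriv (n : ℕ) (M : ℕ → ℝ → Matrix (Fin n) (Fin n) ℝ)
    (A : ℕ → Matrix (Fin n) (Fin n) ℝ) (S : Set ℝ) (t : ℝ) (N : ℕ)
    (h : ∀ p, p < N → ∀ i j : Fin n, HasDerivWithinAt (fun s => M p s i j)
      ((A p * M p t - M p t * A (p + 1)) i j) S t) :
    ∀ k, k ≤ N → ∀ i j : Fin n,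
      HasDerivWithinAt (fun s => ((List.range k).map (fun p => M p s)).prod i j)
        ((A 0 * ((List.range k).map (fun p => M p t)).prod
          - ((List.range k).map (fun p => M p t)).prod * A k) i j) S t := by
  intro k
  induction k with
  | zero =>
    intro _ i j
    simpa using hasDerivWithinAt_const t S ((1 : Matrix (Fin n) (Fin n) ℝ) i j)
  | succ k ih =>
    intro hk i j
    have ih' := ih (by omega)
    have hM := h k (by omega)
    simp only [List.range_succ, List.map_append, List.prod_append, List.map_cons, List.map_nil,
      List.prod_cons, List.prod_nil, mul_one]
    set P : ℝ → Matrix (Fin n) (Fin n) ℝ := fun s => ((List.range k).map (fun p => M p s)).prod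
      with hP
    have hd : HasDerivWithinAt (fun s => ∑ l, P s i l * M k s l j)
        (∑ l, ((A 0 * P t - P t * A k) i l * M k t l j
          + P t i l * (A k * M k t - M k t * A (k + 1)) l j)) S t := by
      apply HasDerivWithinAt.fun_sum
      intro l _
      exact (ih' i l).mul (hM l j)
    have e : (∑ l, ((A 0 * P t - P t * A k) i l * M k t l j
          + P t i l * (A k * M k t - M k t * A (k + 1)) l j))
        = (A 0 * (P t * M k t) - P t * M k t * A (k + 1)) i j := by
      rw [Finset.sum_add_distrib, ← Matrix.mul_apply, ← Matrix.mul_apply, ← Matrix.add_apply]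
      have : (A 0 * P t - P t * A k) * M k t + P t * (A k * M k t - M k t * A (k + 1))
          = A 0 * (P t * M k t) - P t * M k t * A (k + 1) := by
        simp only [sub_mul, mul_sub, mul_assoc]
        abel
      rw [this]
    rw [e] at hd
    exact hd

/-- If the triangle `(x^m_i)` evolves by the geometric RSK dynamics
(dyn-rsk) driven by a smooth path `η`, then the matrix
`b(t) = E_1(w^1(t)) ⋯ E_n(w^n(t))` satisfies `b'(t) = ε_{η'(t)} b(t)` for `t ≥ 0`. -/
theorem stmt3 (n : ℕ) (η η' : ℝ → ℕ → ℝ) (x x' : ℕ → ℕ → ℝ → ℝ)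
    (hη : ∀ i t, 1 ≤ i → i ≤ n → t ∈ Set.Ici (0 : ℝ) →
      HasDerivWithinAt (fun s => η s i) (η' t i) (Set.Ici 0) t)
    (hx : ∀ m i t, 1 ≤ i → i ≤ m → m ≤ n → t ∈ Set.Ici (0 : ℝ) →
      HasDerivWithinAt (x m i) (x' m i t) (Set.Ici 0) t)
    (h11 : ∀ t ∈ Set.Ici (0 : ℝ), x' 1 1 t = η' t 1)
    (hmm : ∀ m, 2 ≤ m → m ≤ n → ∀ t ∈ Set.Ici (0 : ℝ),
      x' m m t = η' t m - Real.exp (x m m t - x (m - 1) (m - 1) t))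
    (hm1 : ∀ m, 2 ≤ m → m ≤ n → ∀ t ∈ Set.Ici (0 : ℝ),
      x' m 1 t = x' (m - 1) 1 t + Real.exp (x m 2 t - x (m - 1) 1 t))
    (hmi : ∀ m i, 1 < i → i < m → m ≤ n → ∀ t ∈ Set.Ici (0 : ℝ),
      x' m i t = x' (m - 1) i t + Real.exp (x m (i + 1) t - x (m - 1) i t)
        - Real.exp (x m i t - x (m - 1) (i - 1) t)) :
    ∀ t ∈ Set.Ici (0 : ℝ), ∀ p q : Fin n,
      HasDerivWithinAt (fun s => bMat n x s p q)
        ((eps (fun i : Fin n => η' t ((i : ℕ) + 1)) * bMat n x t) p q) (Set.Ici 0) t := by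
  intro t ht p q
  have hW0 : ∀ m s, wfun x m 1 s = Real.exp (x m 1 s) := fun m s => by simp [wfun]
  have hW : ∀ m i s, wfun x m (i + 2) s =
      Real.exp (x (m + i + 1) (i + 2) s - x (m + i) (i + 1) s) := fun m i s => by
    simp [wfun]
    rfl
  -- diagonal of the Lax matrices
  let lam : ℕ → ℕ → ℝ := fun m l =>
    if l = 0 then x' m 1 t else x' (m + l) (l + 1) t + wfun x m (l + 1) t
  have hl0 : ∀ m, lam m 0 = x' m 1 t := fun m => by simp [lam]
  have hl1 : ∀ m l, lam m (l + 1) = x' (m + l + 1) (l + 2) t + wfun x m (l + 2) t :=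
    fun m l => by simp [lam, add_assoc]
  let A : ℕ → Matrix (Fin n) (Fin n) ℝ := fun p =>
    bid n (fun i => if i < p then 0 else lam (p + 1) (i - p)) (fun i => if i < p then 0 else 1)
  let M : ℕ → ℝ → Matrix (Fin n) (Fin n) ℝ := fun p s =>
    bid n (fun i => if i < p then 1 else wfun x (p + 1) (i - p + 1) s)
      (fun i => if i < p then 0 else 1)
  have hEM : ∀ p s, Emat (n := n) p (fun l => wfun x (p + 1) (l + 1) s) = M p s := by
    intro p s
    ext i j
    simp only [Emat, M, bid, Matrix.of_apply, Fin.ext_iff]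
    split_ifs <;> rfl
  have hb : ∀ s, bMat n x s = ((List.range n).map (fun p => M p s)).prod := by
    intro s
    rw [← List.map_coe_finRange_eq_range, List.map_map, bMat]
    congr 2
    funext p
    exact hEM p s
  have hAn : A n = 0 := by
    ext i j
    simp [A, bid]
  have hA0 : A 0 = eps (fun i : Fin n => η' t ((i : ℕ) + 1)) := by
    ext i j
    simp only [A, bid, eps, Matrix.of_apply]
    have hi := i.2
    congr 1
    generalize (i : ℕ) = a at hi
    rcases a with _ | a
    · simpa [hl0] using h11 t ht
    · have e1 := hmm (a + 2) (by omega) (by omega) t ht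
      simp only [Nat.not_lt_zero, if_false, Nat.sub_zero, Nat.zero_add, hl1, hW]
      have e2 : 1 + a + 1 = a + 2 := by omega
      have e3 : 1 + a = a + 1 := by omega
      rw [e2, e3, e1]
      simp
  -- recursion of the diagonal
  have hr0 : ∀ m, 1 ≤ m → m + 1 ≤ n → lam (m + 1) 0 = lam m 0 + wfun x m 2 t := by
    intro m h1 h2
    have e := hm1 (m + 1) (by omega) h2 t ht
    rw [hl0, hl0, hW m 0 t, e]
    simp
  have hr1 : ∀ m l, 1 ≤ m → m + l + 2 ≤ n →
      lam (m + 1) (l + 1) = x' (m + l + 1) (l + 2) t + wfun x m (l + 3) t := by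
    intro m l h1 h2
    have e := hmi (m + l + 2) (l + 2) (by omega) (by omega) h2 t ht
    rw [hl1, hW, hW m (l + 1)]
    have e1 : m + 1 + l + 1 = m + l + 2 := by omega
    have e2 : m + 1 + l = m + l + 1 := by omega
    have e3 : m + (l + 1) + 1 = m + l + 2 := by omega
    have e4 : m + (l + 1) = m + l + 1 := by omega
    rw [e1, e2, e3, e4, e]
    simp
  have hwd : ∀ m l, 1 ≤ m → m + l + 1 ≤ n →
      HasDerivWithinAt (fun s => wfun x m (l + 2) s)
        (lam m (l + 1) * wfun x m (l + 2) t - wfun x m (l + 2) t * lam (m + 1) l)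
        (Set.Ici 0) t := by
    intro m l h1 h2
    have d := ((hx (m + l + 1) (l + 2) t (by omega) (by omega) h2 ht).sub
      (hx (m + l) (l + 1) t (by omega) (by omega) (by omega) ht)).exp
    have e : lam (m + 1) l = x' (m + l) (l + 1) t + wfun x m (l + 2) t := by
      rcases l with _ | l
      · rw [hr0 m h1 h2, hl0]
        rfl
      · exact hr1 m l h1 h2
    simp only [hW] at e ⊢
    rw [e, hl1, hW]
    refine d.congr_deriv ?_
    simp only [Pi.sub_apply]
    ring
  have hmain : ∀ p, p < n → ∀ i j : Fin n, HasDerivWithinAt (fun s => M p s i j)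
      ((A p * M p t - M p t * A (p + 1)) i j) (Set.Ici 0) t := by
    intro p hp i j
    rw [Matrix.sub_apply]
    simp only [A, M, bid_mul_bid]
    simp only [bid, Matrix.of_apply]
    have hi := i.2
    have hj := j.2
    generalize (i : ℕ) = a at hi
    generalize (j : ℕ) = b at hj
    rcases lt_or_ge a p with hap | hap
    · have h1 : a < p + 1 := by omega
      simp only [hap, h1, if_true]
      refine (hasDerivWithinAt_const _ _ _).congr_deriv ?_
      simp
    · obtain ⟨c, rfl⟩ := Nat.exists_eq_add_of_le hap
      have g1 : ¬ (p + c < p) := by omega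
      have g2 : ¬ (p + c + 1 < p) := by omega
      have g3 : ¬ (p + c + 1 < p + 1) := by omega
      have g4 : p + c + 1 - p = c + 1 := by omega
      have g5 : p + c + 1 - (p + 1) = c := by omega
      simp only [g1, g2, g3, g4, g5, if_false, Nat.add_sub_cancel_left]
      by_cases b0 : b = p + c
      · simp only [b0, if_true]
        rcases c with _ | c
        · simp only [Nat.zero_add, hW0, hl0]
          refine ((hx (p + 1) 1 t (by omega) (by omega) (by omega) ht).exp).congr_deriv ?_
          simp
          ring
        · have g6 : ¬ (p + (c + 1) < p + 1) := by omega
          have g7 : p + (c + 1) - (p + 1) = c := by omega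
          simp only [g6, g7, if_false]
          exact hwd (p + 1) c (by omega) (by omega)
      · simp only [b0, if_false]
        refine (hasDerivWithinAt_const _ _ _).congr_deriv ?_
        by_cases b1 : b = p + c + 1
        · simp only [b1, if_true]
          rcases c with _ | c
          · have := hr0 (p + 1) (by omega) (by omega)
            simp [this]
          · have g6 : ¬ (p + (c + 1) < p + 1) := by omega
            have := hr1 (p + 1) c (by omega) (by omega)
            simp only [g6, if_false]
            rw [this, hl1]
            ring
        · simp [b1]
  have := prod_deriv n M A (Set.Ici 0) t n hmain n le_rfl p q
  rw [hAn, hA0, mul_zero, sub_zero] at this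
  simp only [hb]
  exact this
end

section
/- Let n ≥ 1, let ξ = (ξ^m_i)_{1≤i≤m≤n} be a triangle of size n, and let η : [0,∞) → ℝ^n be smooth with η(0) = 0. Define μ_1 = ξ^1_1 and μ_m = Σ_{i=1}^m ξ^m_i − Σ_{i=1}^{m−1} ξ^{m−1}_i for 2 ≤ m ≤ n; set π_m(t) = η_m(t) + μ_m; and for 2 ≤ k ≤ m ≤ n set r^m_k = Σ_{i=1}^{k−1} ξ^{m−1}_i − Σ_{i=1}^{k−1} ξ^m_i. Define functions x^m_i on [0,∞) recursively by: x^1_1(t) = π_1(t); for 2 ≤ m ≤ n, writing y^m_m := π_m, x^m_m(t) = π_m(t) − log[e^{−r^m_m} + ∫_0^t e^{π_m(s) − x^{m−1}_{m−1}(s)} ds]; for 1 < k < m, x^m_k(t) = y^m_k(t) − log[e^{−r^m_k} + ∫_0^t e^{y^m_k(s) − x^{m−1}_{k−1}(s)} ds] where y^m_k(t) = x^{m−1}_k(t) + log[e^{−r^m_{k+1}} + ∫_0^t e^{y^m_{k+1}(s) − x^{m−1}_k(s)} ds]; and x^m_1(t) = x^{m−1}_1(t) + log[e^{−r^m_2}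 + ∫_0^t e^{y^m_2(s) − x^{m−1}_1(s)} ds]. Then x^m_i(0) = ξ^m_i for all 1 ≤ i ≤ m ≤ n, and the functions x^m_i are differentiable and satisfy the system (dyn-rsk) driven by η on [0,∞). -/
open Set in
/-- Derivative of the logarithm of the integral. -/
lemma log_int_deriv (u v : ℝ → ℝ) (c : ℝ) (hu : DifferentiableOn ℝ u (Ici 0))
    (hv : DifferentiableOn ℝ v (Ici 0)) (t : ℝ) (ht : t ∈ Ici (0 : ℝ)) :
    HasDerivWithinAt
      (fun t => Real.log (Real.exp (-c) + ∫ s in (0:ℝ)..t, Real.exp (u s - v s)))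
      (Real.exp (u t - Real.log (Real.exp (-c) + ∫ s in (0:ℝ)..t, Real.exp (u s - v s)) - v t))
      (Ici 0) t := by
  have ht0 : (0:ℝ) ≤ t := ht
  set g : ℝ → ℝ := fun s => Real.exp (u s - v s) with hg
  have hgc : ContinuousOn g (Ici 0) :=
    Real.continuous_exp.comp_continuousOn (hu.continuousOn.sub hv.continuousOn)
  -- extend `g` continuously to the whole line
  set G : ℝ → ℝ := fun s => g (max s 0) with hG
  have hGc : Continuous G := by
    refine hgc.comp_continuous (continuous_id.max continuous_const) ?_
    intro s
    exact le_max_right s (0:ℝ)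
  have hint : ∀ a ∈ Ici (0:ℝ), (∫ s in (0:ℝ)..a, g s) = ∫ s in (0:ℝ)..a, G s := by
    intro a ha
    have ha0 : (0:ℝ) ≤ a := ha
    refine intervalIntegral.integral_congr ?_
    intro s hs
    rw [uIcc_of_le ha0] at hs
    simp only [hG, max_eq_left hs.1]
  have hd : HasDerivWithinAt (fun a => ∫ s in (0:ℝ)..a, g s) (g t) (Ici 0) t := by
    have h1 : HasDerivAt (fun a => ∫ s in (0:ℝ)..a, G s) (G t) t :=
      intervalIntegral.integral_hasDerivAt_right (hGc.intervalIntegrable _ _)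
        hGc.aestronglyMeasurable.stronglyMeasurableAtFilter hGc.continuousAt
    have h2 : G t = g t := by simp only [hG, max_eq_left ht0]
    rw [← h2]
    exact h1.hasDerivWithinAt.congr hint (hint t ht)
  have hpos : 0 < Real.exp (-c) + ∫ s in (0:ℝ)..t, g s := by
    have := intervalIntegral.integral_nonneg (f := g) (μ := MeasureTheory.volume) ht0
      (fun s _ => (Real.exp_pos _).le)
    have := Real.exp_pos (-c)
    linarith
  have h3 := (hd.const_add (Real.exp (-c))).log hpos.ne'
  convert h3 using 1
  rw [show u t - Real.log (Real.exp (-c) + ∫ s in (0:ℝ)..t, g s) - v t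
    = (u t - v t) - Real.log (Real.exp (-c) + ∫ s in (0:ℝ)..t, g s) by ring,
    Real.exp_sub, Real.exp_log hpos]

/-- The explicit integral formulas defining `Π^ξ η` produce functions
`x^m_i` with `x^m_i(0) = ξ^m_i` which are differentiable and satisfy the geometric RSK
dynamics (dyn-rsk) driven by `η` on `[0, ∞)`.  All indices are 1-based. -/
theorem stmt4 (n : ℕ) (hn : 1 ≤ n) (ξ : ℕ → ℕ → ℝ) (η : ℝ → ℕ → ℝ)
    (hη : ∀ i, ContDiff ℝ (⊤ : ℕ∞) (fun s => η s i)) (hη0 : ∀ i, η 0 i = 0)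
    (x y : ℕ → ℕ → ℝ → ℝ) (μ : ℕ → ℝ) (π : ℕ → ℝ → ℝ) (r : ℕ → ℕ → ℝ)
    (hμ1 : μ 1 = ξ 1 1)
    (hμ : ∀ m, 2 ≤ m → m ≤ n →
      μ m = ∑ i ∈ Finset.Icc 1 m, ξ m i - ∑ i ∈ Finset.Icc 1 (m - 1), ξ (m - 1) i)
    (hπ : ∀ m t, π m t = η t m + μ m)
    (hr : ∀ m k, 2 ≤ k → k ≤ m → m ≤ n →
      r m k = ∑ i ∈ Finset.Icc 1 (k - 1), ξ (m - 1) i - ∑ i ∈ Finset.Icc 1 (k - 1), ξ m i)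
    (hx11 : ∀ t, x 1 1 t = π 1 t)
    (hymm : ∀ m, y m m = π m)
    (hxmm : ∀ m, 2 ≤ m → m ≤ n → ∀ t, x m m t = π m t -
      Real.log (Real.exp (-(r m m)) +
        ∫ s in (0:ℝ)..t, Real.exp (π m s - x (m - 1) (m - 1) s)))
    (hy : ∀ m k, 1 < k → k < m → m ≤ n → ∀ t, y m k t = x (m - 1) k t +
      Real.log (Real.exp (-(r m (k + 1))) +
        ∫ s in (0:ℝ)..t, Real.exp (y m (k + 1) s - x (m - 1) k s)))
    (hxk : ∀ m k, 1 < k → k < m → m ≤ n → ∀ t, x m k t = y m k t -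
      Real.log (Real.exp (-(r m k)) +
        ∫ s in (0:ℝ)..t, Real.exp (y m k s - x (m - 1) (k - 1) s)))
    (hx1 : ∀ m, 2 ≤ m → m ≤ n → ∀ t, x m 1 t = x (m - 1) 1 t +
      Real.log (Real.exp (-(r m 2)) +
        ∫ s in (0:ℝ)..t, Real.exp (y m 2 s - x (m - 1) 1 s))) :
    (∀ m i, 1 ≤ i → i ≤ m → m ≤ n → x m i 0 = ξ m i) ∧
    ∃ x' : ℕ → ℕ → ℝ → ℝ,
      (∀ m i, 1 ≤ i → i ≤ m → m ≤ n → ∀ t ∈ Set.Ici (0 : ℝ),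
        HasDerivWithinAt (x m i) (x' m i t) (Set.Ici 0) t) ∧
      (∀ t ∈ Set.Ici (0 : ℝ), x' 1 1 t = deriv (fun s => η s 1) t) ∧
      (∀ m, 2 ≤ m → m ≤ n → ∀ t ∈ Set.Ici (0 : ℝ),
        x' m m t = deriv (fun s => η s m) t - Real.exp (x m m t - x (m - 1) (m - 1) t) ∧
        x' m 1 t = x' (m - 1) 1 t + Real.exp (x m 2 t - x (m - 1) 1 t)) ∧
      (∀ m i, 1 < i → i < m → m ≤ n → ∀ t ∈ Set.Ici (0 : ℝ),
        x' m i t = x' (m - 1) i t + Real.exp (x m (i + 1) t - x (m - 1) i t)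
          - Real.exp (x m i t - x (m - 1) (i - 1) t)) := by
  -- uniform formula for `x m k`, `2 ≤ k ≤ m`
  have hxu : ∀ m k, 2 ≤ k → k ≤ m → m ≤ n → ∀ t, x m k t = y m k t -
      Real.log (Real.exp (-(r m k)) +
        ∫ s in (0:ℝ)..t, Real.exp (y m k s - x (m - 1) (k - 1) s)) := by
    intro m k hk hkm hm t
    rcases hkm.lt_or_eq with h | rfl
    · exact hxk m k hk h hm t
    · rw [hymm]; exact hxmm k hk hm t
  have hπd : ∀ m t, HasDerivAt (π m) (deriv (fun s => η s m) t) t := by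
    intro m t
    have h1 : HasDerivAt (fun s => η s m) (deriv (fun s => η s m) t) t :=
      (((hη m).differentiable (by simp)) t).hasDerivAt
    have h2 : π m = fun s => η s m + μ m := funext (hπ m)
    rw [h2]
    exact h1.add_const _
  have hπD : ∀ m, DifferentiableOn ℝ (π m) (Set.Ici 0) := fun m t _ =>
    (hπd m t).differentiableAt.differentiableWithinAt
  -- differentiability of `y m k` given that of row `m - 1`
  have hyD : ∀ m, 2 ≤ m → m ≤ n →
      (∀ i, 1 ≤ i → i ≤ m - 1 → DifferentiableOn ℝ (x (m - 1) i) (Set.Ici 0)) →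
      ∀ k, 2 ≤ k → k ≤ m → DifferentiableOn ℝ (y m k) (Set.Ici 0) := by
    intro m hm hmn ih
    have key : ∀ j k, 2 ≤ k → k + j = m → DifferentiableOn ℝ (y m k) (Set.Ici 0) := by
      intro j
      induction j with
      | zero =>
        intro k hk hkm
        obtain rfl : k = m := by omega
        rw [hymm]; exact hπD _
      | succ j ihj =>
        intro k hk hkm
        have h1 := ihj (k + 1) (by omega) (by omega)
        have h2 := ih k (by omega) (by omega)
        have e : y m k = fun t => x (m - 1) k t +
            Real.log (Real.exp (-(r m (k + 1))) +
              ∫ s in (0:ℝ)..t, Real.exp (y m (k + 1) s - x (m - 1) k s)) :=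
          funext (hy m k (by omega) (by omega) hmn)
        rw [e]
        exact h2.add (fun t ht =>
          (log_int_deriv _ _ (r m (k + 1)) h1 h2 t ht).differentiableWithinAt)
    intro k hk hkm
    exact key (m - k) k hk (by omega)
  have hxD : ∀ m, 1 ≤ m → m ≤ n → ∀ i, 1 ≤ i → i ≤ m →
      DifferentiableOn ℝ (x m i) (Set.Ici 0) := by
    intro m hm
    induction m, hm using Nat.le_induction with
    | base =>
      intro _ i h1 h2
      obtain rfl : i = 1 := by omega
      rw [show x 1 1 = π 1 from funext hx11]
      exact hπD 1
    | succ m hm ih =>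
      intro hmn i h1 h2
      have ih' := ih (by omega)
      have hY := hyD (m + 1) (by omega) hmn ih'
      by_cases hi : i = 1
      · subst hi
        rw [funext (hx1 (m + 1) (by omega) hmn)]
        exact (ih' 1 le_rfl hm).add (fun t ht =>
          (log_int_deriv _ _ (r (m + 1) 2) (hY 2 le_rfl (by omega))
            (ih' 1 le_rfl hm) t ht).differentiableWithinAt)
      · rw [funext (hxu (m + 1) i (by omega) h2 hmn)]
        exact (hY i (by omega) h2).sub (fun t ht =>
          (log_int_deriv _ _ (r (m + 1) i) (hY i (by omega) h2)
            (ih' (i - 1) (by omega) (by omega)) t ht).differentiableWithinAt)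
  have hyD' : ∀ m k, 2 ≤ k → k ≤ m → m ≤ n → DifferentiableOn ℝ (y m k) (Set.Ici 0) :=
    fun m k hk hkm hmn => hyD m (by omega) hmn (hxD (m - 1) (by omega) (by omega)) k hk hkm
  -- derivative of the log terms
  have hL : ∀ m k, 2 ≤ k → k ≤ m → m ≤ n → ∀ t ∈ Set.Ici (0:ℝ),
      HasDerivWithinAt (fun t => Real.log (Real.exp (-(r m k)) +
        ∫ s in (0:ℝ)..t, Real.exp (y m k s - x (m - 1) (k - 1) s)))
        (Real.exp (x m k t - x (m - 1) (k - 1) t)) (Set.Ici 0) t := by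
    intro m k hk hkm hmn t ht
    have := log_int_deriv _ _ (r m k) (hyD' m k hk hkm hmn)
      (hxD (m - 1) (by omega) (by omega) (k - 1) (by omega) (by omega)) t ht
    rw [hxu m k hk hkm hmn t]
    exact this
  have hxW : ∀ m i, 1 ≤ i → i ≤ m → m ≤ n → ∀ t ∈ Set.Ici (0 : ℝ),
        HasDerivWithinAt (x m i) (derivWithin (x m i) (Set.Ici 0) t) (Set.Ici 0) t :=
    fun m i h1 h2 h3 t ht => (hxD m (by omega) h3 i h1 h2 t ht).hasDerivWithinAt
  have hU : ∀ t ∈ Set.Ici (0:ℝ), UniqueDiffWithinAt ℝ (Set.Ici (0:ℝ)) t :=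
    uniqueDiffOn_Ici 0
  refine ⟨?_, fun m i t => derivWithin (x m i) (Set.Ici 0) t, hxW, ?_, ?_, ?_⟩
  · intro m i h1 h2 h3
    have hm : 1 ≤ m := by omega
    induction m, hm using Nat.le_induction generalizing i with
    | base =>
      obtain rfl : i = 1 := by omega
      rw [hx11, hπ, hη0, hμ1, zero_add]
    | succ m hm ih =>
      have ih' : ∀ i, 1 ≤ i → i ≤ m → x m i 0 = ξ m i := fun i a b => ih i a b (by omega)
      by_cases hi : i = 1
      · subst hi
        rw [hx1 (m + 1) (by omega) h3, hr (m + 1) 2 le_rfl (by omega) h3]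
        simp [ih' 1 le_rfl hm]
      · obtain ⟨k, rfl⟩ : ∃ k, i = k + 1 := ⟨i - 1, by omega⟩
        have hk : 1 ≤ k := by omega
        rw [hxu (m + 1) (k + 1) (by omega) h2 h3, hr (m + 1) (k + 1) (by omega) h2 h3]
        rcases h2.lt_or_eq with h | h
        · rw [hy (m + 1) (k + 1) (by omega) h h3,
            hr (m + 1) (k + 1 + 1) (by omega) (by omega) h3]
          simp only [intervalIntegral.integral_same, add_zero, Real.log_exp,
            Nat.add_sub_cancel]
          rw [ih' (k + 1) (by omega) (by omega), Finset.sum_Icc_succ_top (by omega),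
            Finset.sum_Icc_succ_top (by omega)]
          ring
        · obtain rfl : k = m := by omega
          rw [hymm, hπ, hη0, hμ (k + 1) (by omega) h3]
          simp only [intervalIntegral.integral_same, add_zero, Real.log_exp,
            Nat.add_sub_cancel]
          rw [Finset.sum_Icc_succ_top (by omega)]
          ring
  · intro t ht
    beta_reduce
    rw [show x 1 1 = π 1 from funext hx11]
    exact (hπd 1 t).hasDerivWithinAt.derivWithin (hU t ht)
  · intro m hm hmn t ht
    constructor
    · have h := (hπd m t).hasDerivWithinAt (s := Set.Ici 0) |>.sub (hL m m hm le_rfl hmn t ht)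
      refine HasDerivWithinAt.derivWithin (h.congr_of_mem ?_ ht) (hU t ht)
      intro s _
      rw [hxu m m hm le_rfl hmn s, hymm]; rfl
    · have h := (hxW (m - 1) 1 le_rfl (by omega) (by omega) t ht).add
        (hL m 2 le_rfl hm hmn t ht)
      refine HasDerivWithinAt.derivWithin (h.congr_of_mem ?_ ht) (hU t ht)
      intro s _
      exact hx1 m hm hmn s
  · intro m i hi him hmn t ht
    have h := ((hxW (m - 1) i (by omega) (by omega) (by omega) t ht).add
        (hL m (i + 1) (by omega) him hmn t ht)).sub (hL m i hi him.le hmn t ht)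
    refine HasDerivWithinAt.derivWithin (h.congr_of_mem ?_ ht) (hU t ht)
    intro s _
    rw [hxu m i hi him.le hmn s, hy m i hi him hmn s]; rfl
end

section
/- Let η : [0,∞) → ℝ^n be smooth, and let b, L, R : [0,∞) → GL(n,ℝ) be differentiable matrix-valued functions such that b'(t) = ε_{η'(t)} · b(t), L(t) is lower unitriangular, R(t) is upper triangular and invertible, and b(t)·w̄_0 = L(t)·R(t) for all t ≥ 0. Then L'(t) = L(t)·Π_−(L(t)^{−1} ε_{η'(t)} L(t)) and R'(t) = ε_{d(t)} · R(t), where d(t) ∈ ℝ^n has components d_i(t) = R_{ii}'(t)/R_{ii}(t). -/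
/-- `Π₋(A)`: the strictly lower triangular part of `A`. -/
def lowerPart {n : ℕ} (A : Matrix (Fin n) (Fin n) ℝ) : Matrix (Fin n) (Fin n) ℝ :=
  Matrix.of fun i j : Fin n => if j < i then A i j else 0

theorem deriv_const_aux {f : ℝ → ℝ} {f' c t : ℝ} (ht : t ∈ Set.Ici (0 : ℝ))
    (h : HasDerivWithinAt f f' (Set.Ici 0) t) (hc : ∀ s ∈ Set.Ici (0 : ℝ), f s = c) : f' = 0 := by
  have h2 : HasDerivWithinAt f 0 (Set.Ici 0) t :=
    (hasDerivWithinAt_const t (Set.Ici 0) c).congr hc (hc t ht)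
  exact (uniqueDiffOn_Ici (0 : ℝ) t ht).eq_deriv _ h h2

theorem alg_aux {n : ℕ} (lam : Fin n → ℝ) (L R L' R' : Matrix (Fin n) (Fin n) ℝ)
    (hL1 : ∀ i, L i i = 1) (hL0 : ∀ i j, i < j → L i j = 0)
    (hR0 : ∀ i j, j < i → R i j = 0) (hR : IsUnit R)
    (hL' : ∀ i j, i ≤ j → L' i j = 0) (hR' : ∀ i j, j < i → R' i j = 0)
    (h : L' * R + L * R' = eps lam * (L * R)) :
    L' = L * lowerPart (L⁻¹ * eps lam * L) ∧
      R' = eps (fun i : Fin n => R' i i / R i i) * R := by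
  have hLtri : L.BlockTriangular OrderDual.toDual := fun i j hij => hL0 i j hij
  have hLdet : L.det = 1 := by
    rw [Matrix.det_of_isLowerTriangular L hLtri]
    simp [hL1]
  have hLu : IsUnit L.det := by simp [hLdet]
  have hRu : IsUnit R.det := (Matrix.isUnit_iff_isUnit_det R).1 hR
  have := L.invertibleOfIsUnitDet hLu
  have := R.invertibleOfIsUnitDet hRu
  have hK0 : ∀ i j, i < j → L⁻¹ i j = 0 := fun i j hij =>
    Matrix.blockTriangular_inv_of_blockTriangular hLtri hij
  have hRtri : R.BlockTriangular id := fun i j hij => hR0 i j hij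
  have hQ0 : ∀ i j, j < i → R⁻¹ i j = 0 := fun i j hij =>
    Matrix.blockTriangular_inv_of_blockTriangular hRtri hij
  have hK1 : ∀ i, L⁻¹ i i = 1 := by
    intro i
    have e : (L⁻¹ * L) i i = 1 := by rw [Matrix.nonsing_inv_mul L hLu]; simp
    rw [Matrix.mul_apply, Finset.sum_eq_single i] at e
    · simpa [hL1] using e
    · intro k _ hk
      rcases lt_or_gt_of_ne hk with hk | hk
      · rw [hL0 k i hk, mul_zero]
      · rw [hK0 i k hk, zero_mul]
    · simp
  set X := L⁻¹ * L' with hX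
  set S := R' * R⁻¹ with hS
  set M := L⁻¹ * eps lam * L with hM
  have hMX : M = X + S := by
    have e : L⁻¹ * (L' * R + L * R') * R⁻¹ = L⁻¹ * (eps lam * (L * R)) * R⁻¹ := by rw [h]
    have e1 : L⁻¹ * (L' * R + L * R') * R⁻¹ = X + S := by
      rw [Matrix.mul_add, Matrix.add_mul, Matrix.nonsing_inv_mul_cancel_left _ _ hLu,
        ← Matrix.mul_assoc, Matrix.mul_nonsing_inv_cancel_right _ _ hRu]
    have e2 : L⁻¹ * (eps lam * (L * R)) * R⁻¹ = M := by
      rw [← Matrix.mul_assoc (eps lam), ← Matrix.mul_assoc L⁻¹,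
        Matrix.mul_nonsing_inv_cancel_right _ _ hRu, ← Matrix.mul_assoc]
    rw [← e1, ← e2, e]
  have hX0 : ∀ i j, i ≤ j → X i j = 0 := by
    intro i j hij
    rw [hX, Matrix.mul_apply]
    refine Finset.sum_eq_zero fun k _ => ?_
    rcases lt_or_ge i k with hk | hk
    · rw [hK0 i k hk, zero_mul]
    · rw [hL' k j (hk.trans hij), mul_zero]
  have hS0 : ∀ i j, j < i → S i j = 0 := by
    intro i j hij
    rw [hS, Matrix.mul_apply]
    refine Finset.sum_eq_zero fun k _ => ?_
    rcases lt_or_ge k i with hk | hk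
    · rw [hR' i k hk, zero_mul]
    · rw [hQ0 k j (hij.trans_le hk), mul_zero]
  have hSR : R' = S * R := by
    rw [hS, Matrix.nonsing_inv_mul_cancel_right _ _ hRu]
  have hEL0 : ∀ i j : Fin n, (i : ℕ) + 1 < j → (eps lam * L) i j = 0 := by
    intro i j hij
    rw [Matrix.mul_apply]
    refine Finset.sum_eq_zero fun k _ => ?_
    rcases lt_or_ge k j with hk | hk
    · rw [hL0 k j hk, mul_zero]
    · have hk' : (j : ℕ) ≤ k := hk
      simp only [eps, Matrix.of_apply]
      rw [if_neg (by omega), if_neg (by omega), zero_mul]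
  have hEL1 : ∀ i j : Fin n, (j : ℕ) = i + 1 → (eps lam * L) i j = 1 := by
    intro i j hij
    rw [Matrix.mul_apply, Finset.sum_eq_single j]
    · simp only [eps, Matrix.of_apply]
      rw [if_neg (by omega), if_pos hij, hL1, one_mul]
    · intro k _ hkj
      rcases lt_or_gt_of_ne hkj with hk | hk
      · rw [hL0 k j hk, mul_zero]
      · have hk' : (j : ℕ) < k := hk
        simp only [eps, Matrix.of_apply]
        rw [if_neg (by omega), if_neg (by omega), zero_mul]
    · simp
  have hM0 : ∀ i j : Fin n, (i : ℕ) + 1 < j → M i j = 0 := by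
    intro i j hij
    rw [hM, Matrix.mul_assoc, Matrix.mul_apply]
    refine Finset.sum_eq_zero fun k _ => ?_
    rcases lt_or_ge i k with hk | hk
    · rw [hK0 i k hk, zero_mul]
    · have hk' : (k : ℕ) ≤ i := hk
      rw [hEL0 k j (by omega), mul_zero]
  have hM1 : ∀ i j : Fin n, (j : ℕ) = i + 1 → M i j = 1 := by
    intro i j hij
    rw [hM, Matrix.mul_assoc, Matrix.mul_apply, Finset.sum_eq_single i]
    · rw [hK1, hEL1 i j hij, one_mul]
    · intro k _ hki
      rcases lt_or_gt_of_ne hki with hk | hk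
      · have hk' : (k : ℕ) < i := hk
        rw [hEL0 k j (by omega), mul_zero]
      · rw [hK0 i k hk, zero_mul]
    · simp
  refine ⟨?_, ?_⟩
  · have e : lowerPart M = X := by
      ext i j
      simp only [lowerPart, Matrix.of_apply]
      split_ifs with hij
      · rw [hMX, Matrix.add_apply, hS0 i j hij, add_zero]
      · rw [hX0 i j (not_lt.1 hij)]
    rw [e, hX, Matrix.mul_nonsing_inv_cancel_left _ _ hLu]
  · have hdet : R.det = ∏ i, R i i := Matrix.det_of_isUpperTriangular hRtri
    have hRii : ∀ i, R i i ≠ 0 := by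
      intro i
      have := hRu.ne_zero
      rw [hdet] at this
      exact Finset.prod_ne_zero_iff.1 this i (Finset.mem_univ i)
    have hd : ∀ i, R' i i / R i i = S i i := by
      intro i
      rw [div_eq_iff (hRii i)]
      conv_lhs => rw [hSR]
      rw [Matrix.mul_apply, Finset.sum_eq_single i]
      · intro k _ hki
        rcases lt_or_gt_of_ne hki with hk | hk
        · rw [hS0 i k hk, zero_mul]
        · rw [hR0 k i hk, mul_zero]
      · simp
    have e : eps (fun i : Fin n => R' i i / R i i) = S := by
      ext i j
      simp only [eps, Matrix.of_apply]
      have hMij : M i j = X i j + S i j := by rw [hMX, Matrix.add_apply]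
      split_ifs with h1 h2
      · rw [hd, Fin.ext h1]
      · rw [hX0 i j (by rw [Fin.le_def]; omega), hM1 i j h2] at hMij
        linarith
      · rcases lt_or_ge j i with hij | hij
        · rw [hS0 i j hij]
        · have hij' : (i : ℕ) ≤ j := hij
          rw [hX0 i j hij, hM0 i j (by omega)] at hMij
          linarith
    rw [e]
    exact hSR

/-- If `b' = ε_{η'} b` and `b·w̄_0 = L·R` is a Gauss decomposition with
`L` lower unitriangular and `R` upper triangular invertible, then
`L' = L·Π₋(L⁻¹ ε_{η'} L)` and `R' = ε_d · R` where `d_i = R_{ii}'/R_{ii}`. -/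
theorem stmt5 (n : ℕ) (η : ℝ → Fin n → ℝ) (hη : ∀ i, ContDiff ℝ (⊤ : ℕ∞) (fun s => η s i))
    (b L R b' L' R' : ℝ → Matrix (Fin n) (Fin n) ℝ)
    (hbd : ∀ t ∈ Set.Ici (0 : ℝ), ∀ i j : Fin n,
      HasDerivWithinAt (fun s => b s i j) (b' t i j) (Set.Ici 0) t)
    (hLd : ∀ t ∈ Set.Ici (0 : ℝ), ∀ i j : Fin n,
      HasDerivWithinAt (fun s => L s i j) (L' t i j) (Set.Ici 0) t)
    (hRd : ∀ t ∈ Set.Ici (0 : ℝ), ∀ i j : Fin n,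
      HasDerivWithinAt (fun s => R s i j) (R' t i j) (Set.Ici 0) t)
    (hODE : ∀ t ∈ Set.Ici (0 : ℝ),
      b' t = eps (fun i => deriv (fun s => η s i) t) * b t)
    (hL1 : ∀ t ∈ Set.Ici (0 : ℝ), ∀ i : Fin n, L t i i = 1)
    (hL0 : ∀ t ∈ Set.Ici (0 : ℝ), ∀ i j : Fin n, i < j → L t i j = 0)
    (hR0 : ∀ t ∈ Set.Ici (0 : ℝ), ∀ i j : Fin n, j < i → R t i j = 0)
    (hRinv : ∀ t ∈ Set.Ici (0 : ℝ), IsUnit (R t))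
    (hfact : ∀ t ∈ Set.Ici (0 : ℝ), b t * wbar n = L t * R t) :
    ∀ t ∈ Set.Ici (0 : ℝ),
      L' t = L t * lowerPart ((L t)⁻¹ * eps (fun i => deriv (fun s => η s i) t) * L t) ∧
      R' t = eps (fun i : Fin n => R' t i i / R t i i) * R t := by
  intro t ht
  refine alg_aux _ _ _ _ _ (hL1 t ht) (hL0 t ht) (hR0 t ht) (hRinv t ht) ?_ ?_ ?_
  · intro i j hij
    rcases hij.lt_or_eq with hij | rfl
    · exact deriv_const_aux ht (hLd t ht i j) fun s hs => hL0 s hs i j hij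
    · exact deriv_const_aux ht (hLd t ht i i) fun s hs => hL1 s hs i
  · intro i j hij
    exact deriv_const_aux ht (hRd t ht i j) fun s hs => hR0 s hs i j hij
  · have e : b' t * wbar n = L' t * R t + L t * R' t := by
      ext i j
      have h1 : HasDerivWithinAt (fun s => ∑ k, b s i k * wbar n k j)
          (∑ k, b' t i k * wbar n k j) (Set.Ici 0) t :=
        HasDerivWithinAt.fun_sum fun k _ => (hbd t ht i k).mul_const _
      have h2 : HasDerivWithinAt (fun s => ∑ k, L s i k * R s k j)
          (∑ k, (L' t i k * R t k j + L t i k * R' t k j)) (Set.Ici 0) t :=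
        HasDerivWithinAt.fun_sum fun k _ => (hLd t ht i k).fun_mul (hRd t ht k j)
      have hfg : ∀ s ∈ Set.Ici (0 : ℝ),
          (∑ k, b s i k * wbar n k j) = ∑ k, L s i k * R s k j := by
        intro s hs
        have := congrFun (congrFun (hfact s hs) i) j
        simpa only [Matrix.mul_apply] using this
      have h3 := (uniqueDiffOn_Ici (0 : ℝ) t ht).eq_deriv _ h1 (h2.congr hfg (hfg t ht))
      rw [Matrix.add_apply, Matrix.mul_apply, Matrix.mul_apply, Matrix.mul_apply, h3,
        Finset.sum_add_distrib]
    rw [← e, hODE t ht, Matrix.mul_assoc, hfact t ht]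
end

section
/- Let n ≥ 2, λ ∈ ℝ^n, and let x^m_i : [0,∞) → ℝ (1 ≤ i ≤ m ≤ n) be differentiable functions satisfying the system (dyn). If the triangle X(0) = (x^m_i(0)) belongs to T_λ, then X(t) = (x^m_i(t)) belongs to T_λ for every t ≥ 0. -/
/-- The triangle `X = (x^m_i)` (1-based, `1 ≤ i ≤ m ≤ n`) belongs to `T_λ`:
`λ_m + l^m_i(X) = λ_{m+1} + r^m_i(X)` for all `1 ≤ i ≤ m < n`, where
`l^m_i = e^{x^{m+1}_{i+1}−x^m_i} + e^{x^{m−1}_i−x^m_i}` (`i < m`),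
`l^m_m = e^{x^{m+1}_{m+1}−x^m_m}`,
`r^m_i = e^{x^m_i−x^{m+1}_i} + e^{x^m_i−x^{m−1}_{i−1}}` (`i > 1`), and
`r^m_1 = e^{x^m_1−x^{m+1}_1}`. -/
noncomputable def inTlam (n : ℕ) (lam : ℕ → ℝ) (X : ℕ → ℕ → ℝ) : Prop :=
  ∀ m i, 1 ≤ i → i ≤ m → m < n →
    lam m + (if i < m then
        Real.exp (X (m + 1) (i + 1) - X m i) + Real.exp (X (m - 1) i - X m i)
      else Real.exp (X (m + 1) (m + 1) - X m m)) =
    lam (m + 1) + (if 1 < i then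
        Real.exp (X m i - X (m + 1) i) + Real.exp (X m i - X (m - 1) (i - 1))
      else Real.exp (X m 1 - X (m + 1) 1))

/-- `a^m_i = e^{x^{m-1}_i - x^m_i}` for `1 ≤ i < m`, and `0` otherwise. -/
noncomputable def aa (x : ℕ → ℕ → ℝ → ℝ) (m i : ℕ) (t : ℝ) : ℝ :=
  if 1 ≤ i ∧ i < m then Real.exp (x (m - 1) i t - x m i t) else 0

/-- `b^m_i = e^{x^m_i - x^{m-1}_{i-1}}` for `1 < i ≤ m`, and `0` otherwise. -/
noncomputable def bb (x : ℕ → ℕ → ℝ → ℝ) (m i : ℕ) (t : ℝ) : ℝ :=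
  if 1 < i ∧ i ≤ m then Real.exp (x m i t - x (m - 1) (i - 1) t) else 0

/-- The defect in the equation defining `T_λ`. -/
noncomputable def dd (lam : ℕ → ℝ) (x : ℕ → ℕ → ℝ → ℝ) (m i : ℕ) (t : ℝ) : ℝ :=
  lam m - lam (m + 1) + bb x (m + 1) (i + 1) t + aa x m i t - aa x (m + 1) i t - bb x m i t

lemma aa_nonneg (x : ℕ → ℕ → ℝ → ℝ) (m i : ℕ) (t : ℝ) : 0 ≤ aa x m i t := by
  unfold aa; split_ifs <;> positivity

lemma bb_nonneg (x : ℕ → ℕ → ℝ → ℝ) (m i : ℕ) (t : ℝ) : 0 ≤ bb x m i t := by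
  unfold bb; split_ifs <;> positivity

lemma ab_cross (x : ℕ → ℕ → ℝ → ℝ) (m i : ℕ) (hi : 1 ≤ i) (t : ℝ) :
    aa x (m + 1) (i + 1) t * bb x (m + 1) (i + 1) t = aa x m i t * bb x m (i + 1) t := by
  unfold aa bb
  by_cases h : i < m
  · rw [if_pos (by omega), if_pos (by omega), if_pos (by omega), if_pos (by omega),
      ← Real.exp_add, ← Real.exp_add]
    congr 1
    simp only [Nat.add_sub_cancel]
    ring
  · rw [if_neg (by omega), if_neg (by omega : ¬ (1 ≤ i ∧ i < m))]
    simp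

lemma inTlam_iff (n : ℕ) (lam : ℕ → ℝ) (x : ℕ → ℕ → ℝ → ℝ) (t : ℝ) :
    inTlam n lam (fun m i => x m i t) ↔
      ∀ m i, 1 ≤ i → i ≤ m → m < n → dd lam x m i t = 0 := by
  unfold inTlam
  refine forall_congr' fun m => forall_congr' fun i => forall_congr' fun h1 =>
    forall_congr' fun h2 => forall_congr' fun _ => ?_
  unfold dd aa bb
  rw [if_pos (by omega : 1 < i + 1 ∧ i + 1 ≤ m + 1), if_pos (by omega : 1 ≤ i ∧ i < m + 1)]
  simp only [Nat.add_sub_cancel]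
  by_cases ha : i < m
  · rw [if_pos ha, if_pos (by omega : 1 ≤ i ∧ i < m)]
    by_cases hb : 1 < i
    · rw [if_pos hb, if_pos (by omega : 1 < i ∧ i ≤ m)]
      constructor <;> intro h <;> linarith
    · obtain rfl : i = 1 := by omega
      rw [if_neg hb, if_neg (by omega : ¬ (1 < 1 ∧ 1 ≤ m))]
      constructor <;> intro h <;> linarith
  · obtain rfl : i = m := by omega
    rw [if_neg ha, if_neg (by omega : ¬ (1 ≤ i ∧ i < i))]
    by_cases hb : 1 < i
    · rw [if_pos hb, if_pos (by omega : 1 < i ∧ i ≤ i)]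
      constructor <;> intro h <;> linarith
    · obtain rfl : i = 1 := by omega
      rw [if_neg hb, if_neg (by omega : ¬ (1 < 1 ∧ 1 ≤ 1))]
      constructor <;> intro h <;> linarith

/-- A linear homogeneous ODE with nonpositive rate and zero initial value. -/
lemma ode_zero (f c : ℝ → ℝ) (hc : ∀ t, 0 ≤ c t)
    (hf : ∀ t ∈ Set.Ici (0 : ℝ), HasDerivWithinAt f (-(c t) * f t) (Set.Ici 0) t)
    (h0 : f 0 = 0) : ∀ t ∈ Set.Ici (0 : ℝ), f t = 0 := by
  intro t ht
  have hsq : ∀ s ∈ Set.Ici (0 : ℝ),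
      HasDerivWithinAt (fun s => f s * f s) (-(c s) * f s * f s + f s * (-(c s) * f s))
        (Set.Ici 0) s :=
    fun s hs => (hf s hs).mul (hf s hs)
  have hanti : AntitoneOn (fun s => f s * f s) (Set.Ici (0 : ℝ)) := by
    apply antitoneOn_of_hasDerivWithinAt_nonpos (convex_Ici 0)
      (fun s hs => (hsq s hs).continuousWithinAt)
      (fun s hs => (hsq s (interior_subset hs)).mono interior_subset)
    intro s _
    nlinarith [mul_nonneg (hc s) (mul_self_nonneg (f s))]
  have h := hanti (Set.mem_Ici.2 le_rfl) ht ht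
  simp only [h0, mul_zero] at h
  exact mul_self_eq_zero.1 (le_antisymm h (mul_self_nonneg _))

lemma aa_deriv (n : ℕ) (lam : ℕ → ℝ) (x : ℕ → ℕ → ℝ → ℝ)
    (hx : ∀ m i, 1 ≤ i → i ≤ m → m ≤ n → ∀ t ∈ Set.Ici (0 : ℝ),
      HasDerivWithinAt (x m i) (lam m + aa x m i t - bb x m i t) (Set.Ici 0) t)
    (m i : ℕ) (hm : m + 1 ≤ n) (t : ℝ) (ht : t ∈ Set.Ici (0 : ℝ)) :
    HasDerivWithinAt (aa x (m + 1) i)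
      (aa x (m + 1) i t * (dd lam x m i t + bb x (m + 1) i t - bb x (m + 1) (i + 1) t))
      (Set.Ici 0) t := by
  by_cases h : 1 ≤ i ∧ i < m + 1
  · have he : aa x (m + 1) i = fun s => Real.exp (x m i s - x (m + 1) i s) := by
      funext s
      simp only [aa, if_pos h, Nat.add_sub_cancel]
    have hd := ((hx m i h.1 (by omega) (by omega) t ht).sub
      (hx (m + 1) i h.1 (by omega) hm t ht)).exp
    have hv := congrFun he t
    rw [he]
    refine hd.congr_deriv ?_
    simp only [Pi.sub_apply, dd]
    ring
  · have he : aa x (m + 1) i = fun _ => 0 := by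
      funext s
      simp only [aa, if_neg h]
    rw [he]
    simpa using hasDerivWithinAt_const t (Set.Ici (0 : ℝ)) (0 : ℝ)

lemma bb_deriv (n : ℕ) (lam : ℕ → ℝ) (x : ℕ → ℕ → ℝ → ℝ)
    (hx : ∀ m i, 1 ≤ i → i ≤ m → m ≤ n → ∀ t ∈ Set.Ici (0 : ℝ),
      HasDerivWithinAt (x m i) (lam m + aa x m i t - bb x m i t) (Set.Ici 0) t)
    (m i : ℕ) (hm : m + 1 ≤ n) (t : ℝ) (ht : t ∈ Set.Ici (0 : ℝ)) :
    HasDerivWithinAt (bb x (m + 1) (i + 1))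
      (bb x (m + 1) (i + 1) t *
        (-dd lam x m i t + aa x (m + 1) (i + 1) t - aa x (m + 1) i t))
      (Set.Ici 0) t := by
  by_cases h : 1 < i + 1 ∧ i + 1 ≤ m + 1
  · have he : bb x (m + 1) (i + 1) = fun s => Real.exp (x (m + 1) (i + 1) s - x m i s) := by
      funext s
      simp only [bb, if_pos h, Nat.add_sub_cancel]
    have hd := ((hx (m + 1) (i + 1) (by omega) h.2 hm t ht).sub
      (hx m i (by omega) (by omega) (by omega) t ht)).exp
    rw [he]
    refine hd.congr_deriv ?_
    simp only [Pi.sub_apply, dd]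
    ring
  · have he : bb x (m + 1) (i + 1) = fun _ => 0 := by
      funext s
      simp only [bb, if_neg h]
    rw [he]
    simpa using hasDerivWithinAt_const t (Set.Ici (0 : ℝ)) (0 : ℝ)

/-- Evolution of the defects. -/
lemma dd_deriv (n : ℕ) (lam : ℕ → ℝ) (x : ℕ → ℕ → ℝ → ℝ)
    (hx : ∀ m i, 1 ≤ i → i ≤ m → m ≤ n → ∀ t ∈ Set.Ici (0 : ℝ),
      HasDerivWithinAt (x m i) (lam m + aa x m i t - bb x m i t) (Set.Ici 0) t)
    (m i : ℕ) (hm : m + 2 ≤ n) (t : ℝ) (ht : t ∈ Set.Ici (0 : ℝ)) :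
    HasDerivWithinAt (dd lam x (m + 1) (i + 1))
      (-(bb x (m + 2) (i + 2) t + aa x (m + 2) (i + 1) t) * dd lam x (m + 1) (i + 1) t
        + aa x (m + 1) (i + 1) t * dd lam x m (i + 1) t
        + bb x (m + 1) (i + 1) t * dd lam x m i t)
      (Set.Ici 0) t := by
  have hd := (((((hasDerivWithinAt_const t (Set.Ici (0 : ℝ)) (lam (m + 1) - lam (m + 2))).add
    (bb_deriv n lam x hx (m + 1) (i + 1) hm t ht)).add
    (aa_deriv n lam x hx m (i + 1) (by omega) t ht)).sub
    (aa_deriv n lam x hx (m + 1) (i + 1) hm t ht)).sub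
    (bb_deriv n lam x hx m i (by omega) t ht))
  have e1 := ab_cross x (m + 1) (i + 1) (by omega) t
  have e2 : aa x (m + 2) (i + 1) t * bb x (m + 2) (i + 1) t
      = aa x (m + 1) i t * bb x (m + 1) (i + 1) t := by
    rcases Nat.eq_zero_or_pos i with rfl | hi
    · simp [aa, bb]
    · exact ab_cross x (m + 1) i hi t
  refine HasDerivWithinAt.congr_deriv (f := dd lam x (m + 1) (i + 1)) hd ?_
  simp only [Nat.add_assoc, Nat.reduceAdd] at e1 e2 ⊢
  linear_combination e1 - e2

/-- The set `T_λ` is invariant under the flow (dyn):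
if `X(0) ∈ T_λ` and `X(t)` evolves by (dyn), then `X(t) ∈ T_λ` for all `t ≥ 0`. -/
theorem stmt6 (n : ℕ) (hn : 2 ≤ n) (lam : ℕ → ℝ) (x : ℕ → ℕ → ℝ → ℝ)
    (h11 : ∀ t ∈ Set.Ici (0 : ℝ), HasDerivWithinAt (x 1 1) (lam 1) (Set.Ici 0) t)
    (h1 : ∀ m, 2 ≤ m → m ≤ n → ∀ t ∈ Set.Ici (0 : ℝ),
      HasDerivWithinAt (x m 1)
        (lam m + Real.exp (x (m - 1) 1 t - x m 1 t)) (Set.Ici 0) t)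
    (hmm : ∀ m, 2 ≤ m → m ≤ n → ∀ t ∈ Set.Ici (0 : ℝ),
      HasDerivWithinAt (x m m)
        (lam m - Real.exp (x m m t - x (m - 1) (m - 1) t)) (Set.Ici 0) t)
    (hmi : ∀ m i, 1 < i → i < m → m ≤ n → ∀ t ∈ Set.Ici (0 : ℝ),
      HasDerivWithinAt (x m i)
        (lam m + Real.exp (x (m - 1) i t - x m i t)
          - Real.exp (x m i t - x (m - 1) (i - 1) t)) (Set.Ici 0) t)
    (h0 : inTlam n lam (fun m i => x m i 0)) :
    ∀ t ∈ Set.Ici (0 : ℝ), inTlam n lam (fun m i => x m i t) := by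
  have hx : ∀ m i, 1 ≤ i → i ≤ m → m ≤ n → ∀ t ∈ Set.Ici (0 : ℝ),
      HasDerivWithinAt (x m i) (lam m + aa x m i t - bb x m i t) (Set.Ici 0) t := by
    intro m i hi him hm t ht
    unfold aa bb
    rcases Nat.lt_or_ge i m with hlt | hge
    · rw [if_pos ⟨hi, hlt⟩]
      rcases Nat.lt_or_ge 1 i with h1i | h1i
      · rw [if_pos ⟨h1i, him⟩]
        exact hmi m i h1i hlt hm t ht
      · obtain rfl : i = 1 := by omega
        rw [if_neg (by omega), sub_zero]
        exact h1 m (by omega) hm t ht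
    · obtain rfl : i = m := by omega
      rw [if_neg (by omega), add_zero]
      rcases Nat.lt_or_ge 1 i with h1i | h1i
      · rw [if_pos ⟨h1i, him⟩]
        exact hmm i h1i hm t ht
      · obtain rfl : i = 1 := by omega
        rw [if_neg (by omega), sub_zero]
        exact h11 t ht
  have h0' := (inTlam_iff n lam x 0).1 h0
  have key : ∀ m i, 1 ≤ i → i ≤ m → m < n → ∀ t ∈ Set.Ici (0 : ℝ), dd lam x m i t = 0 := by
    intro m
    induction m with
    | zero => intro i h1 h2; omega
    | succ m ih =>
      intro i hi him hm
      obtain ⟨i, rfl⟩ : ∃ j, i = j + 1 := ⟨i - 1, by omega⟩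
      apply ode_zero (dd lam x (m + 1) (i + 1))
        (fun t => bb x (m + 2) (i + 2) t + aa x (m + 2) (i + 1) t)
        (fun t => add_nonneg (bb_nonneg _ _ _ _) (aa_nonneg _ _ _ _))
      · intro t ht
        refine (dd_deriv n lam x hx m i hm t ht).congr_deriv ?_
        have z1 : aa x (m + 1) (i + 1) t * dd lam x m (i + 1) t = 0 := by
          by_cases h : i + 1 ≤ m
          · rw [ih (i + 1) (by omega) h (by omega) t ht, mul_zero]
          · rw [aa, if_neg (by omega), zero_mul]
        have z2 : bb x (m + 1) (i + 1) t * dd lam x m i t = 0 := by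
          by_cases h : 1 ≤ i
          · rw [ih i h (by omega) (by omega) t ht, mul_zero]
          · rw [bb, if_neg (by omega), zero_mul]
        rw [z1, z2, add_zero, add_zero]
      · exact h0' (m + 1) (i + 1) hi him hm
  intro t ht
  exact (inTlam_iff n lam x t).2 fun m i hi him hm => key m i hi him hm t ht
end

section
/- Let n ≥ 2, λ ∈ ℝ^n, and let X = (x^m_i) be a triangle of size n belonging to T_λ. Define real numbers v^m_i for 1 ≤ i ≤ m ≤ n recursively by: v^1_1 = λ_1; v^m_m = λ_m − e^{x^m_m−x^{m−1}_{m−1}} and v^m_1 = v^{m−1}_1 + e^{x^m_2−x^{m−1}_1} for 2 ≤ m ≤ n; and v^m_i = v^{m−1}_i + e^{x^m_{i+1}−x^{m−1}_i} − e^{x^m_i−x^{m−1}_{i−1}} for 1 < i < m ≤ n. Then for all 2 ≤ m ≤ n: v^m_1 = λ_m + e^{x^{m−1}_1−x^m_1}, and v^m_i = λ_m + e^{x^{m−1}_i−x^m_i} − e^{x^m_i−x^{m−1}_{i−1}} for 1 < i < m. (Hence on triangles in T_λ the vector fields of the flows (dyn-rsk) and (dyn) coincide.) -/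
/-- On a triangle `X ∈ T_λ`, the (dyn-rsk) recursion for the velocities
`v^m_i` yields the (dyn) expressions: for `2 ≤ m ≤ n`,
`v^m_1 = λ_m + e^{x^{m−1}_1−x^m_1}` and, for `1 < i < m`,
`v^m_i = λ_m + e^{x^{m−1}_i−x^m_i} − e^{x^m_i−x^{m−1}_{i−1}}`. -/
theorem stmt7 (n : ℕ) (hn : 2 ≤ n) (lam : ℕ → ℝ) (X : ℕ → ℕ → ℝ)
    (hX : inTlam n lam X) (v : ℕ → ℕ → ℝ)
    (hv11 : v 1 1 = lam 1)
    (hvmm : ∀ m, 2 ≤ m → m ≤ n →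
      v m m = lam m - Real.exp (X m m - X (m - 1) (m - 1)))
    (hvm1 : ∀ m, 2 ≤ m → m ≤ n →
      v m 1 = v (m - 1) 1 + Real.exp (X m 2 - X (m - 1) 1))
    (hvmi : ∀ m i, 1 < i → i < m → m ≤ n →
      v m i = v (m - 1) i + Real.exp (X m (i + 1) - X (m - 1) i)
        - Real.exp (X m i - X (m - 1) (i - 1))) :
    ∀ m, 2 ≤ m → m ≤ n →
      v m 1 = lam m + Real.exp (X (m - 1) 1 - X m 1) ∧
      ∀ i, 1 < i → i < m →
        v m i = lam m + Real.exp (X (m - 1) i - X m i)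
          - Real.exp (X m i - X (m - 1) (i - 1)) := by
  intro m hm
  induction m, hm using Nat.le_induction with
  | base =>
    intro hm
    refine ⟨?_, fun i h1 h2 => by omega⟩
    have h := hX 1 1 le_rfl le_rfl (by omega)
    have h1 := hvm1 2 le_rfl hm
    norm_num at h h1 ⊢
    rw [h1, hv11]
    exact h
  | succ m hm ih =>
    intro hmn
    obtain ⟨ih1, ih2⟩ := ih (by omega)
    constructor
    · have h := hX m 1 le_rfl (by omega) (by omega)
      have h1 := hvm1 (m + 1) (by omega) hmn
      rw [if_pos (by omega), if_neg (by omega)] at h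
      simp only [Nat.add_sub_cancel] at h1 ⊢
      norm_num at h
      linarith
    · intro i hi him
      have h := hX m i (by omega) (by omega) (by omega)
      have h1 := hvmi (m + 1) i hi him hmn
      rw [if_pos hi] at h
      simp only [Nat.add_sub_cancel] at h1 ⊢
      by_cases hlt : i < m
      · rw [if_pos hlt] at h
        have h2 := ih2 i hi hlt
        linarith
      · rw [if_neg hlt] at h
        obtain rfl : i = m := by omega
        have h2 := hvmm i (by omega) (by omega)
        linarith
end

section
/- Let n ≥ 2, λ ∈ ℝ^n, I an open interval, and let x^m_i : I → ℝ (1 ≤ i ≤ m ≤ n) be differentiable functions satisfying the system (dyn) such that the triangle X(t) = (x^m_i(t)) belongs to T_λ for every t ∈ I. Then the functions x_i := x^n_i are twice differentiable on I and satisfy the opposite-sign Toda equations: x_1'' = −e^{x_2−x_1}, x_n'' = e^{x_n−x_{n−1}}, and x_i'' = −e^{x_{i+1}−x_i} + e^{x_i−x_{i−1}} for 1 < i < n. -/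
/-- If a triangle evolves by (dyn) and stays in `T_λ` on an open
interval `I`, then its bottom row solves the opposite-sign Toda lattice on `I`. -/
theorem stmt9 (n : ℕ) (hn : 2 ≤ n) (lam : ℕ → ℝ) (a b : ℝ) (x : ℕ → ℕ → ℝ → ℝ)
    (h11 : ∀ t ∈ Set.Ioo a b, HasDerivAt (x 1 1) (lam 1) t)
    (h1 : ∀ m, 2 ≤ m → m ≤ n → ∀ t ∈ Set.Ioo a b,
      HasDerivAt (x m 1) (lam m + Real.exp (x (m - 1) 1 t - x m 1 t)) t)
    (hmm : ∀ m, 2 ≤ m → m ≤ n → ∀ t ∈ Set.Ioo a b,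
      HasDerivAt (x m m) (lam m - Real.exp (x m m t - x (m - 1) (m - 1) t)) t)
    (hmi : ∀ m i, 1 < i → i < m → m ≤ n → ∀ t ∈ Set.Ioo a b,
      HasDerivAt (x m i)
        (lam m + Real.exp (x (m - 1) i t - x m i t)
          - Real.exp (x m i t - x (m - 1) (i - 1) t)) t)
    (hT : ∀ t ∈ Set.Ioo a b, inTlam n lam (fun m i => x m i t)) :
    ∀ t ∈ Set.Ioo a b,
      HasDerivAt (fun s => deriv (x n 1) s) (-Real.exp (x n 2 t - x n 1 t)) t ∧
      HasDerivAt (fun s => deriv (x n n) s) (Real.exp (x n n t - x n (n - 1) t)) t ∧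
      ∀ i, 1 < i → i < n →
        HasDerivAt (fun s => deriv (x n i) s)
          (-Real.exp (x n (i + 1) t - x n i t) + Real.exp (x n i t - x n (i - 1) t)) t := by
  obtain ⟨m, rfl⟩ : ∃ m, n = m + 1 := ⟨n - 1, by omega⟩
  have hm : 1 ≤ m := by omega
  -- the derivative of the row `m = n - 1`, rewritten through the row `n`
  have hy : ∀ i, 1 ≤ i → i ≤ m → ∀ t ∈ Set.Ioo a b,
      HasDerivAt (x m i) (lam (m + 1) + Real.exp (x m i t - x (m + 1) i t)
        - Real.exp (x (m + 1) (i + 1) t - x m i t)) t := by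
    intro i hi him t ht
    have hT' := hT t ht m i hi him (by omega)
    simp only at hT'
    rcases Nat.lt_or_ge i m with h | h
    · rw [if_pos h] at hT'
      rcases Nat.lt_or_ge 1 i with h' | h'
      · rw [if_pos h'] at hT'
        convert hmi m i h' h (by omega) t ht using 1
        linarith
      · obtain rfl : i = 1 := by omega
        rw [if_neg (by omega)] at hT'
        convert h1 m (by omega) (by omega) t ht using 1
        linarith
    · obtain rfl : i = m := by omega
      rw [if_neg (by omega)] at hT'
      rcases Nat.lt_or_ge 1 i with h' | h'
      · rw [if_pos h'] at hT'
        convert hmm i (by omega) (by omega) t ht using 1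
        linarith
      · obtain rfl : i = 1 := by omega
        rw [if_neg (by omega)] at hT'
        convert h11 t ht using 1
        linarith
  have key : ∀ (f g : ℝ → ℝ) (d t : ℝ), t ∈ Set.Ioo a b →
      (∀ s ∈ Set.Ioo a b, HasDerivAt f (g s) s) → HasDerivAt g d t →
      HasDerivAt (fun s => deriv f s) d t := by
    intro f g d t ht hf hg
    refine hg.congr_of_eventuallyEq ?_
    filter_upwards [isOpen_Ioo.mem_nhds ht] with s hs
    exact (hf s hs).deriv
  simp only [Nat.add_sub_cancel] at *
  intro t ht
  have hx1 := h1 (m + 1) (by omega) le_rfl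
  have hxn := hmm (m + 1) (by omega) le_rfl
  simp only [Nat.add_sub_cancel] at hx1 hxn
  refine ⟨?_, ?_, ?_⟩
  · refine key _ _ _ t ht hx1 ?_
    refine HasDerivAt.congr_deriv ((((hy 1 le_rfl hm t ht).sub (hx1 t ht)).exp).const_add (lam (m + 1))) ?_
    simp only [Real.exp_sub, Pi.sub_apply]
    field_simp
    ring
  · refine key _ _ _ t ht hxn ?_
    refine HasDerivAt.congr_deriv ((((hxn t ht).sub (hy m hm le_rfl t ht)).exp).const_sub (lam (m + 1))) ?_
    simp only [Real.exp_sub, Pi.sub_apply]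
    field_simp
    ring
  · intro i hi him
    obtain ⟨j, rfl⟩ : ∃ j, i = j + 1 := ⟨i - 1, by omega⟩
    have hxi := hmi (m + 1) (j + 1) hi him le_rfl
    simp only [Nat.add_sub_cancel] at hxi ⊢
    refine key _ _ _ t ht hxi ?_
    have hA := ((hy (j + 1) (by omega) (by omega) t ht).sub (hxi t ht)).exp
    have hB := ((hxi t ht).sub (hy j (by omega) (by omega) t ht)).exp
    refine HasDerivAt.congr_deriv ((hA.const_add (lam (m + 1))).sub hB) ?_
    simp only [Real.exp_sub, Pi.sub_apply]
    field_simp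
    ring
end

section
/- Let n ≥ 2, λ ∈ ℝ^n, I an open interval, and let x^m_i : I → ℝ (1 ≤ i ≤ m ≤ n) be differentiable functions satisfying the system (dyn) such that the triangle X(t) = (x^m_i(t)) belongs to T_λ for every t ∈ I. Then the matrix-valued function M(t) := g_λ(X(t)) is differentiable on I and satisfies the Lax equation M'(t) = M(t)·Q(t) − Q(t)·M(t), where Q(t) = Π_−(M(t)) is the strictly lower triangular part of M(t). -/
/-- `g_λ(X)`: the tridiagonal (Lax) matrix (Lean row `i` is row `i+1` of the paper). -/
noncomputable def gmat (n : ℕ) (lam : ℕ → ℝ) (X : ℕ → ℕ → ℝ) : Matrix (Fin n) (Fin n) ℝ :=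
  Matrix.of fun i j : Fin n =>
    if (j : ℕ) = (i : ℕ) + 1 then 1
    else if (i : ℕ) = (j : ℕ) + 1 then -Real.exp (X n ((i : ℕ) + 1) - X n (i : ℕ))
    else if i = j then
      (if (i : ℕ) = 0 then lam n + Real.exp (X (n - 1) 1 - X n 1)
       else if (i : ℕ) = n - 1 then lam n - Real.exp (X n n - X (n - 1) (n - 1))
       else lam n + Real.exp (X (n - 1) ((i : ℕ) + 1) - X n ((i : ℕ) + 1))
         - Real.exp (X n ((i : ℕ) + 1) - X (n - 1) (i : ℕ)))
    else 0

theorem hda_congr {f g : ℝ → ℝ} {u v t : ℝ} (h : HasDerivAt f u t) (h1 : g = f)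
    (h2 : v = u) : HasDerivAt g v t := by
  subst h1 h2; exact h

theorem lowerPart_gmat (n : ℕ) (lam : ℕ → ℝ) (X : ℕ → ℕ → ℝ) (i j : Fin n) :
    lowerPart (gmat n lam X) i j =
      if (i : ℕ) = (j : ℕ) + 1 then -Real.exp (X n ((i : ℕ) + 1) - X n (i : ℕ)) else 0 := by
  simp only [lowerPart, gmat, Matrix.of_apply, Fin.lt_def, Fin.ext_iff]
  split_ifs <;> first | rfl | omega

theorem mul_lower (n : ℕ) (lam : ℕ → ℝ) (X : ℕ → ℕ → ℝ) (M : Matrix (Fin n) (Fin n) ℝ)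
    (p q : Fin n) :
    (M * lowerPart (gmat n lam X)) p q =
      if h : (q : ℕ) + 1 < n then
        M p ⟨q + 1, h⟩ * -Real.exp (X n ((q : ℕ) + 1 + 1) - X n ((q : ℕ) + 1)) else 0 := by
  rw [Matrix.mul_apply]
  simp only [lowerPart_gmat]
  split_ifs with h
  · rw [Finset.sum_eq_single ⟨q + 1, h⟩]
    · simp
    · intro k _ hk
      rw [if_neg (fun hh => hk (Fin.ext hh)), mul_zero]
    · simp
  · apply Finset.sum_eq_zero
    intro k _
    rw [if_neg (by have := k.2; omega), mul_zero]

theorem lower_mul (n : ℕ) (lam : ℕ → ℝ) (X : ℕ → ℕ → ℝ) (M : Matrix (Fin n) (Fin n) ℝ)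
    (p q : Fin n) :
    (lowerPart (gmat n lam X) * M) p q =
      if (p : ℕ) = 0 then 0 else
        -Real.exp (X n ((p : ℕ) + 1) - X n (p : ℕ)) * M ⟨p - 1, by have := p.2; omega⟩ q := by
  rw [Matrix.mul_apply]
  simp only [lowerPart_gmat]
  split_ifs with h
  · apply Finset.sum_eq_zero
    intro k _
    rw [if_neg (by omega), zero_mul]
  · rw [Finset.sum_eq_single ⟨p - 1, by have := p.2; omega⟩]
    · rw [if_pos (by simp only; omega)]
    · intro k _ hk
      rw [if_neg (fun hh => hk (Fin.ext (by simp only; omega))), zero_mul]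
    · simp

/-- If a triangle evolves by (dyn) and stays in `T_λ` on an open
interval `I`, then `M(t) = g_λ(X(t))` satisfies the Lax equation `M' = [M, Π₋(M)]`. -/
theorem stmt10 (n : ℕ) (hn : 2 ≤ n) (lam : ℕ → ℝ) (a b : ℝ) (x : ℕ → ℕ → ℝ → ℝ)
    (h11 : ∀ t ∈ Set.Ioo a b, HasDerivAt (x 1 1) (lam 1) t)
    (h1 : ∀ m, 2 ≤ m → m ≤ n → ∀ t ∈ Set.Ioo a b,
      HasDerivAt (x m 1) (lam m + Real.exp (x (m - 1) 1 t - x m 1 t)) t)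
    (hmm : ∀ m, 2 ≤ m → m ≤ n → ∀ t ∈ Set.Ioo a b,
      HasDerivAt (x m m) (lam m - Real.exp (x m m t - x (m - 1) (m - 1) t)) t)
    (hmi : ∀ m i, 1 < i → i < m → m ≤ n → ∀ t ∈ Set.Ioo a b,
      HasDerivAt (x m i)
        (lam m + Real.exp (x (m - 1) i t - x m i t)
          - Real.exp (x m i t - x (m - 1) (i - 1) t)) t)
    (hT : ∀ t ∈ Set.Ioo a b, inTlam n lam (fun m i => x m i t)) :
    ∀ t ∈ Set.Ioo a b, ∀ p q : Fin n,
      HasDerivAt (fun s => gmat n lam (fun m i => x m i s) p q)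
        ((gmat n lam (fun m i => x m i t) * lowerPart (gmat n lam (fun m i => x m i t)) -
          lowerPart (gmat n lam (fun m i => x m i t)) * gmat n lam (fun m i => x m i t)) p q)
        t := by
  intro t ht p q
  have hx : ∀ p : Fin n, HasDerivAt (x n ((p : ℕ) + 1))
      (gmat n lam (fun m i => x m i t) p p) t := by
    intro p
    have hp := p.2
    simp only [gmat, Matrix.of_apply, if_true]
    rw [if_neg (by omega), if_neg (by omega)]
    split_ifs with c1 c2
    · rw [c1]; exact h1 n hn le_rfl t ht
    · have : (p : ℕ) + 1 = n := by omega
      rw [this]; exact hmm n hn le_rfl t ht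
    · exact hmi n (p + 1) (by omega) (by omega) le_rfl t ht
  have hy : ∀ i, 1 ≤ i → i < n → HasDerivAt (x (n - 1) i)
      (lam n + Real.exp (x (n - 1) i t - x n i t)
        - Real.exp (x n (i + 1) t - x (n - 1) i t)) t := by
    intro i hi hin
    have key := hT t ht (n - 1) i hi (by omega) (by omega)
    simp only [show n - 1 + 1 = n by omega] at key
    by_cases c1 : i = 1
    · subst c1
      by_cases c2 : n = 2
      · subst c2
        norm_num at key ⊢
        refine hda_congr (h11 t ht) rfl ?_
        linarith
      · rw [if_pos (by omega), if_neg (by omega)] at key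
        refine hda_congr (h1 (n - 1) (by omega) (by omega) t ht) rfl ?_
        linarith
    · by_cases c2 : i = n - 1
      · subst c2
        rw [if_neg (by omega), if_pos (by omega)] at key
        refine hda_congr (hmm (n - 1) (by omega) (by omega) t ht) rfl ?_
        simp only [show n - 1 + 1 = n by omega]
        linarith
      · rw [if_pos (by omega), if_pos (by omega)] at key
        refine hda_congr (hmi (n - 1) i (by omega) (by omega) (by omega) t ht) rfl ?_
        linarith
  have hp := p.2
  have hq := q.2
  rw [Matrix.sub_apply, mul_lower, lower_mul]
  by_cases e1 : (q : ℕ) = p + 1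
  ·
    simp only [gmat, Matrix.of_apply, e1, if_true, Fin.ext_iff]
    refine hda_congr (hasDerivAt_const t (1 : ℝ)) rfl ?_
    split_ifs <;> first | omega | simp
  by_cases e2 : (p : ℕ) = q + 1
  · have hd := ((hx p).sub (hx q)).exp.neg
    have hpq : (⟨(q : ℕ) + 1, by omega⟩ : Fin n) = p := Fin.ext e2.symm
    have hqp : (⟨(p : ℕ) - 1, by omega⟩ : Fin n) = q := Fin.ext (by simp only; omega)
    rw [dif_pos (by omega), if_neg (by omega), hpq, hqp]
    refine hda_congr hd ?_ ?_
    · funext s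
      simp only [gmat, Matrix.of_apply, e2, Pi.neg_apply, Pi.sub_apply]
      rw [if_neg (by omega), if_pos trivial]
    · simp only [e2, Pi.sub_apply]
      ring
  by_cases e3 : p = q
  · subst e3
    have ee : ∀ u v w : ℝ, Real.exp (u - v) * Real.exp (v - w) = Real.exp (u - w) := by
      intro u v w
      rw [← Real.exp_add]; congr 1; ring
    have hX := hx p
    by_cases c0 : (p : ℕ) = 0
    · have hd := (((hy 1 le_rfl (by omega)).sub (h1 n hn le_rfl t ht)).exp).const_add (lam n)
      rw [dif_pos (by omega), if_pos c0]
      refine hda_congr hd ?_ ?_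
      · funext s
        simp [gmat, c0]
      · simp [gmat, c0]
        have := ee (x n 2 t) (x (n-1) 1 t) (x n 1 t)
        linear_combination -this
    by_cases c1 : (p : ℕ) = n - 1
    · have hd := (((hmm n hn le_rfl t ht).sub (hy (n - 1) (by omega) (by omega))).exp).const_sub (lam n)
      have hs : n - 1 + 1 = n := by omega
      have h0 : n - 1 ≠ 0 := by omega
      rw [dif_neg (by omega), if_neg c0]
      refine hda_congr hd ?_ ?_
      · funext s
        simp [gmat, c1, h0]
      · have h3 : n - 1 = n - 1 - 1 + 1 := by omega
        simp [gmat, c1, hs, ← h3]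
        have := ee (x n n t) (x (n-1) (n-1) t) (x n (n-1) t)
        linear_combination -this
    · have hm := hmi n (p + 1) (by omega) (by omega) le_rfl t ht
      have hd := ((hy (p+1) (by omega) (by omega)).sub hm).exp.sub
        (hm.sub (hy p (by omega) (by omega))).exp |>.const_add (lam n)
      have h3 : (p : ℕ) = p - 1 + 1 := by omega
      rw [dif_pos (by omega), if_neg c0]
      refine hda_congr hd ?_ ?_
      · funext s
        simp [gmat, c0, c1]
        ring
      · have g1 : gmat n lam (fun m i => x m i t) p ⟨p + 1, by omega⟩ = 1 := by
          simp only [gmat, Matrix.of_apply, if_true]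
        have g2 : gmat n lam (fun m i => x m i t) ⟨p - 1, by omega⟩ p = 1 := by
          simp only [gmat, Matrix.of_apply]
          rw [if_pos h3]
        rw [g1, g2]
        simp only [Pi.sub_apply, Nat.add_sub_cancel]
        have e1 := ee (x n (p+1+1) t) (x (n-1) (p+1) t) (x n (p+1) t)
        have e2 := ee (x n (p+1) t) (x (n-1) p t) (x n p t)
        linear_combination e1 - e2
  · have e4 : (p : ℕ) ≠ q := fun h => e3 (Fin.ext h)
    simp only [gmat, Matrix.of_apply, e1, e2, e3, if_false]
    refine hda_congr (hasDerivAt_const t (0 : ℝ)) rfl ?_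
    simp only [Fin.ext_iff]
    split_ifs <;> first | omega | skip
    all_goals first
      | (simp; done)
      | (have e5 : (p : ℕ) = q + 1 + 1 := by omega
         simp only [e5, Nat.add_sub_cancel]; ring)
end

section
/- Let n ≥ 2, λ ∈ ℝ^n, and let X = (x^m_i) be a triangle of size n belonging to T_λ. Set v_1 = λ_n + e^{x^{n−1}_1−x^n_1}, v_n = λ_n − e^{x^n_n−x^{n−1}_{n−1}}, and v_i = λ_n + e^{x^{n−1}_i−x^n_i} − e^{x^n_i−x^{n−1}_{i−1}} for 1 < i < n. Then F(X) = Σ_{i=1}^n (n+1−2i)·v_i = (n−1)v_1 + (n−3)v_2 + ⋯ + (1−n)v_n. -/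
theorem aux_coef (M : ℕ) (c : ℝ) :
    ∑ i ∈ Finset.range M, (c - 2 * (i : ℝ)) = M * (c - M + 1) := by
  induction M with
  | zero => simp
  | succ k ih => rw [Finset.sum_range_succ, ih]; push_cast; ring

/-- Left exponentials, extended by zero. -/
noncomputable def auxA (X : ℕ → ℕ → ℝ) (m i : ℕ) : ℝ :=
  if 1 ≤ i then Real.exp (X (m + 1) (i + 1) - X m i) else 0

/-- Right exponentials, extended by zero. -/
noncomputable def auxB (X : ℕ → ℕ → ℝ) (m i : ℕ) : ℝ :=
  if i ≤ m then Real.exp (X m i - X (m + 1) i) else 0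

theorem aux_rel (n : ℕ) (lam : ℕ → ℝ) (X : ℕ → ℕ → ℝ) (hX : inTlam n lam X)
    (m i : ℕ) (hi : i ≤ m) (hm : m + 1 < n) :
    lam (m + 1) + auxB X m (i + 1) - auxA X m i =
      lam (m + 2) + auxB X (m + 1) (i + 1) - auxA X (m + 1) (i + 1) := by
  have h := hX (m + 1) (i + 1) (by omega) (by omega) hm
  unfold auxA auxB
  simp only [Nat.add_sub_cancel] at h
  rw [if_pos (show i + 1 ≤ m + 1 by omega), if_pos (show 1 ≤ i + 1 by omega)]
  rcases Nat.lt_or_ge i m with h1 | h1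
  · rw [if_pos (show i + 1 < m + 1 by omega)] at h
    rw [if_pos (show i + 1 ≤ m by omega)]
    rcases Nat.eq_zero_or_pos i with h0 | h0
    · subst h0
      simp at h ⊢
      linarith
    · rw [if_pos (show 1 < i + 1 by omega)] at h
      rw [if_pos (show 1 ≤ i by omega)]
      linarith
  · obtain rfl : i = m := by omega
    rw [if_neg (show ¬ (i + 1 < i + 1) by omega)] at h
    rw [if_neg (show ¬ (i + 1 ≤ i) by omega)]
    rcases Nat.eq_zero_or_pos i with h0 | h0
    · subst h0
      simp at h ⊢
      linarith
    · rw [if_pos (show 1 < i + 1 by omega)] at h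
      rw [if_pos (show 1 ≤ i by omega)]
      linarith

theorem aux_main (n : ℕ) (lam : ℕ → ℝ) (X : ℕ → ℕ → ℝ) (hX : inTlam n lam X)
    (m : ℕ) (hm : m < n) :
    ∑ k ∈ Finset.range m, ∑ i ∈ Finset.range (k + 1),
      (auxA X (k + 1) (i + 1) + auxB X (k + 1) (i + 1)) =
    ∑ i ∈ Finset.range (m + 1), ((m : ℝ) - 2 * (i : ℝ)) *
      (lam (m + 1) + auxB X m (i + 1) - auxA X m i) := by
  induction m with
  | zero => simp [auxA, auxB]
  | succ m ih =>
    rw [Finset.sum_range_succ, ih (by omega)]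
    have e1 : ∑ i ∈ Finset.range (m + 1), ((m : ℝ) - 2 * (i : ℝ)) *
        (lam (m + 1) + auxB X m (i + 1) - auxA X m i) =
        ∑ i ∈ Finset.range (m + 1), ((m : ℝ) - 2 * (i : ℝ)) *
        (auxB X (m + 1) (i + 1) - auxA X (m + 1) (i + 1)) := by
      have : ∀ i ∈ Finset.range (m + 1), ((m : ℝ) - 2 * (i : ℝ)) *
        (lam (m + 1) + auxB X m (i + 1) - auxA X m i) =
        ((m : ℝ) - 2 * (i : ℝ)) * lam (m + 2) + ((m : ℝ) - 2 * (i : ℝ)) *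
        (auxB X (m + 1) (i + 1) - auxA X (m + 1) (i + 1)) := by
        intro i hi
        rw [aux_rel n lam X hX m i (by have := Finset.mem_range.1 hi; omega) hm]
        ring
      rw [Finset.sum_congr rfl this, Finset.sum_add_distrib, ← Finset.sum_mul, aux_coef]
      push_cast
      ring
    have e2 : ∑ i ∈ Finset.range (m + 1 + 1), (((m + 1 : ℕ) : ℝ) - 2 * (i : ℝ)) *
        (lam (m + 1 + 1) + auxB X (m + 1) (i + 1) - auxA X (m + 1) i) =
        ∑ i ∈ Finset.range (m + 1), (((m : ℝ) + 1 - 2 * (i : ℝ)) * auxB X (m + 1) (i + 1))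
        - ∑ i ∈ Finset.range (m + 1), (((m : ℝ) - 1 - 2 * (i : ℝ)) * auxA X (m + 1) (i + 1)) := by
      have : ∀ i ∈ Finset.range (m + 1 + 1), (((m + 1 : ℕ) : ℝ) - 2 * (i : ℝ)) *
        (lam (m + 1 + 1) + auxB X (m + 1) (i + 1) - auxA X (m + 1) i) =
        (((m + 1 : ℕ) : ℝ) - 2 * (i : ℝ)) * lam (m + 1 + 1) +
        ((((m + 1 : ℕ) : ℝ) - 2 * (i : ℝ)) * auxB X (m + 1) (i + 1) -
        (((m + 1 : ℕ) : ℝ) - 2 * (i : ℝ)) * auxA X (m + 1) i) := by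
        intro i _
        ring
      rw [Finset.sum_congr rfl this, Finset.sum_add_distrib, ← Finset.sum_mul, aux_coef,
        Finset.sum_sub_distrib, Finset.sum_range_succ _ (m + 1),
        Finset.sum_range_succ' (fun i => (((m + 1 : ℕ) : ℝ) - 2 * (i : ℝ)) * auxA X (m + 1) i)]
      have hB : auxB X (m + 1) (m + 1 + 1) = 0 := by simp [auxB]
      have hA : auxA X (m + 1) 0 = 0 := by simp [auxA]
      rw [hA, hB]
      have hs : ∀ i : ℕ, (((m + 1 : ℕ) : ℝ) - 2 * ((i + 1 : ℕ) : ℝ)) = (m : ℝ) - 1 - 2 * i := by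
        intro i; push_cast; ring
      simp only [hs]
      push_cast
      ring
    rw [e1, e2, ← Finset.sum_sub_distrib, ← Finset.sum_add_distrib]
    apply Finset.sum_congr rfl
    intro i _
    ring

/-- (Givental-type formula.) For `X ∈ T_λ`,
`F(X) = Σ_{1≤i≤m<n} (e^{x^{m+1}_{i+1}−x^m_i} + e^{x^m_i−x^{m+1}_i})`
equals `(n−1)v_1 + (n−3)v_2 + ⋯ + (1−n)v_n`, where `v` is the (dyn) velocity of
the bottom row. -/
theorem stmt11 (n : ℕ) (hn : 2 ≤ n) (lam : ℕ → ℝ) (X : ℕ → ℕ → ℝ)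
    (hX : inTlam n lam X) (v : ℕ → ℝ)
    (hv1 : v 1 = lam n + Real.exp (X (n - 1) 1 - X n 1))
    (hvn : v n = lam n - Real.exp (X n n - X (n - 1) (n - 1)))
    (hvi : ∀ i, 1 < i → i < n →
      v i = lam n + Real.exp (X (n - 1) i - X n i)
        - Real.exp (X n i - X (n - 1) (i - 1))) :
    ∑ m ∈ Finset.Ico 1 n, ∑ i ∈ Finset.Icc 1 m,
      (Real.exp (X (m + 1) (i + 1) - X m i) + Real.exp (X m i - X (m + 1) i)) =
    ∑ i ∈ Finset.Icc 1 n, ((n : ℝ) + 1 - 2 * (i : ℝ)) * v i := by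
  obtain ⟨m, rfl⟩ : ∃ m, n = m + 1 := ⟨n - 1, by omega⟩
  have h := aux_main (m + 1) lam X hX m (by omega)
  simp only [Nat.add_sub_cancel] at hv1 hvn hvi
  have key : ∀ (M : ℕ) (f : ℕ → ℝ),
      ∑ i ∈ Finset.Icc 1 M, f i = ∑ i ∈ Finset.range M, f (i + 1) := by
    intro M f
    rw [Finset.range_eq_Ico, Finset.sum_Ico_add' f 0 M 1]
    rfl
  have key2 : ∀ (M : ℕ) (f : ℕ → ℝ),
      ∑ i ∈ Finset.Ico 1 (M + 1), f i = ∑ i ∈ Finset.range M, f (i + 1) := by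
    intro M f
    rw [Finset.range_eq_Ico, Finset.sum_Ico_add' f 0 M 1]
  rw [key2, key]
  have hl : ∀ k ∈ Finset.range m, ∑ i ∈ Finset.Icc 1 (k + 1),
      (Real.exp (X (k + 1 + 1) (i + 1) - X (k + 1) i) +
        Real.exp (X (k + 1) i - X (k + 1 + 1) i)) =
      ∑ i ∈ Finset.range (k + 1),
      (auxA X (k + 1) (i + 1) + auxB X (k + 1) (i + 1)) := by
    intro k _
    rw [key]
    apply Finset.sum_congr rfl
    intro i hi
    have := Finset.mem_range.1 hi
    unfold auxA auxB
    rw [if_pos (by omega), if_pos (by omega)]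
  rw [Finset.sum_congr rfl hl, h]
  apply Finset.sum_congr rfl
  intro i hi
  have hi' := Finset.mem_range.1 hi
  have hv : v (i + 1) = lam (m + 1) + auxB X m (i + 1) - auxA X m i := by
    unfold auxA auxB
    rcases Nat.eq_zero_or_pos i with h0 | h0
    · subst h0
      rw [if_pos (by omega), if_neg (by omega), hv1]
      ring
    · rw [if_pos (show 1 ≤ i by omega)]
      rcases Nat.lt_or_ge i m with h1 | h1
      · rw [if_pos (by omega), hvi (i + 1) (by omega) (by omega)]
        simp
      · obtain rfl : i = m := by omega
        rw [if_neg (by omega), hvn]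
        ring
  rw [hv]
  push_cast
  ring
end

section
/- For all integers 1 ≤ k ≤ n, det[ C(n−i, k−j) ]_{i,j=1,…,k} = 1, where C(a,b) denotes the binomial coefficient, with the convention C(a,b) = 0 when b > a. -/
/-- (Gessel–Viennot.) For `1 ≤ k ≤ n`,
`det[ C(n−i, k−j) ]_{i,j=1,…,k} = 1`, with `C(a,b) = 0` when `b > a`. -/
theorem stmt16 (n k : ℕ) (hk : 1 ≤ k) (hkn : k ≤ n) :
    Matrix.det (Matrix.of fun i j : Fin k =>
      ((n - 1 - (i : ℕ)).choose (k - 1 - (j : ℕ)) : ℤ)) = 1 := by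
  rw [← Matrix.det_submatrix_equiv_self (Fin.revPerm (n := k))]
  let L : Matrix (Fin k) (Fin k) ℤ := Matrix.of fun i l => ((i : ℕ).choose (l : ℕ) : ℤ)
  let U : Matrix (Fin k) (Fin k) ℤ :=
    Matrix.of fun l j => if (l : ℕ) ≤ j then ((n - k).choose ((j : ℕ) - l) : ℤ) else 0
  have hL : L.det = 1 := by
    rw [Matrix.det_of_lowerTriangular]
    · simp [L]
    · intro i j hij
      have : (i : ℕ) < j := by simpa using hij
      simp [L, Nat.choose_eq_zero_of_lt this]
  have hU : U.det = 1 := by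
    rw [Matrix.det_of_upperTriangular]
    · simp [U]
    · intro i j hij
      have : (j : ℕ) < i := by simpa using hij
      exact if_neg (by omega)
  have hLU : (Matrix.of fun i j : Fin k =>
      ((n - 1 - (i : ℕ)).choose (k - 1 - (j : ℕ)) : ℤ)).submatrix Fin.revPerm Fin.revPerm
      = L * U := by
    ext i j
    have hi := i.isLt
    have hj := j.isLt
    simp only [Matrix.submatrix_apply, Matrix.of_apply, Fin.revPerm_apply, Fin.val_rev,
      Matrix.mul_apply, L, U]
    have e1 : n - 1 - (k - ((i : ℕ) + 1)) = i + (n - k) := by omega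
    have e2 : k - 1 - (k - ((j : ℕ) + 1)) = j := by omega
    rw [e1, e2, Nat.add_choose_eq, Finset.Nat.sum_antidiagonal_eq_sum_range_succ_mk,
      Fin.sum_univ_eq_sum_range (fun l => ((i : ℕ).choose l : ℤ) *
        (if l ≤ (j : ℕ) then ((n - k).choose ((j : ℕ) - l) : ℤ) else 0)) k]
    push_cast
    rw [← Finset.sum_subset (s₁ := Finset.range ((j : ℕ) + 1)) (s₂ := Finset.range k)]
    · apply Finset.sum_congr rfl
      intro l hl
      rw [if_pos (by simpa [Nat.lt_succ_iff] using hl)]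
    · intro l hl
      simp only [Finset.mem_range] at *
      omega
    · intro l _ hl
      rw [if_neg (by simp only [Finset.mem_range] at hl; omega), mul_zero]
  rw [hLU, Matrix.det_mul, hL, hU, one_mul]
end
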